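/- arXiv:0810.5373 — 4 statements merged into one kernel-verified Lean document; each statement's English description precedes it below -/
import Mathlib

section
/- Fix three distinct elements i, j, k of P. Then the Keel module V_P is generated, as a ℤ-module, by the images of the basis elements e_S with i ∈ S and 2 ≤ |S| ≤ n−3, together with the image of e_{{j,k}}. (This is the generation step in the proof of Proposition 4.2: every class e_{{s,t}} with s ≠ i, t ≠ i, {s,t} ≠ {j,k} is congruent, modulo the submodule generated by the listed elements, to 0.) -/
/-- `B(P)`: the set of subsets `S ⊆ P` with `2 ≤ |S| ≤ n - 2`, as a subtype. -/
abbrev KeelB (P : Type*) [Fintype P] [DecidableEq P] : Type _ :=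
  {S : Finset P // 2 ≤ S.card ∧ S.card ≤ Fintype.card P - 2}

/-- The complement operation on `B(P)`. -/
def KeelB.compl {P : Type*} [Fintype P] [DecidableEq P] (S : KeelB P) : KeelB P :=
  ⟨(S : Finset P)ᶜ, by
    have h1 := S.2.1
    have h2 := S.2.2
    have h3 : (S : Finset P).card ≤ Fintype.card P := Finset.card_le_univ _
    rw [Finset.card_compl]
    omega⟩

/-- The sum `Σ_{S ∈ B(P), p,q ∈ S, r,s ∉ S} e_S` in the free ℤ-module on `B(P)`. -/
noncomputable def keelQuad {P : Type*} [Fintype P] [DecidableEq P] (p q r s : P) : KeelB P →₀ ℤ :=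
  ∑ S ∈ Finset.univ.filter
      (fun S : KeelB P =>
        p ∈ (S : Finset P) ∧ q ∈ (S : Finset P) ∧ r ∉ (S : Finset P) ∧ s ∉ (S : Finset P)),
    Finsupp.single S 1

/-- The defining relations of the Keel module: (i) `e_S - e_{P∖S}` for `S ∈ B(P)`;
(ii) the four-point relations for every quadruple of distinct elements of `P`. -/
def keelRels (P : Type*) [Fintype P] [DecidableEq P] : Set (KeelB P →₀ ℤ) :=
  (Set.range fun S : KeelB P => Finsupp.single S 1 - Finsupp.single S.compl 1) ∪
  {x | ∃ p q r s : P, p ≠ q ∧ p ≠ r ∧ p ≠ s ∧ q ≠ r ∧ q ≠ s ∧ r ≠ s ∧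
      (x = keelQuad p q r s - keelQuad p r q s ∨ x = keelQuad p q r s - keelQuad p s q r)}

/-- The Keel module `V_P`: the free ℤ-module on `B(P)` modulo the Keel relations. -/
abbrev KeelModule (P : Type*) [Fintype P] [DecidableEq P] : Type _ :=
  (KeelB P →₀ ℤ) ⧸ Submodule.span ℤ (keelRels P)

/-- The image of the basis element `e_S` in the Keel module. -/
noncomputable def keelClass {P : Type*} [Fintype P] [DecidableEq P] (S : KeelB P) : KeelModule P :=
  Submodule.Quotient.mk (Finsupp.single S 1)

/-!
Modulo the classes `e_S` with `i ∈ S` and `|S| ≤ n - 3`, the sum `keelQuad i a b c` has a single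
surviving term, the one with `S = P ∖ {b, c}`, which equals `e_{{b,c}}`. The four-point relation
between `keelQuad i a b c` and `keelQuad i b a c` then identifies `e_{{b,c}}` with `e_{{a,c}}`, and
changing one element at a time identifies the classes of all pairs that avoid `i`. Every other class
lies in the submodule, up to passing to the complement.
-/

section

variable {P : Type*} [Fintype P] [DecidableEq P]

namespace KeelB

theorem coe_compl (S : KeelB P) : (S.compl : Finset P) = (S : Finset P)ᶜ := rfl

theorem eq_compl_or_card_add_card_lt {S T : KeelB P} (h : Disjoint (S : Finset P) T) :
    S = T.compl ∨ (S : Finset P).card + (T : Finset P).card < Fintype.card P := by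
  have hsub : (S : Finset P) ⊆ (T : Finset P)ᶜ := Finset.subset_compl_iff_disjoint_right.2 h
  rcases hsub.eq_or_ssubset with heq | hlt
  · exact .inl (Subtype.ext heq)
  · have hcard := Finset.card_lt_card hlt
    rw [Finset.card_compl] at hcard
    exact .inr (by omega)

theorem ne_of_coe_eq_pair {a b : P} (S : KeelB P) (h : (S : Finset P) = {a, b}) : a ≠ b := by
  rintro rfl
  simpa [h] using S.2.1

end KeelB

theorem keelClass_compl (S : KeelB P) : keelClass S.compl = keelClass S :=
  ((Submodule.Quotient.eq _).2 (Submodule.subset_span (.inl ⟨S, rfl⟩))).symm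

theorem span_range_keelClass : Submodule.span ℤ (Set.range (keelClass (P := P))) = ⊤ := by
  have hrange : Set.range (keelClass (P := P)) =
      (Submodule.span ℤ (keelRels P)).mkQ '' Set.range fun S => Finsupp.single S 1 :=
    Set.range_comp _ _
  have hbasis : Submodule.span ℤ (Set.range fun S : KeelB P => Finsupp.single S (1 : ℤ)) = ⊤ := by
    simpa using (Finsupp.basisSingleOne (R := ℤ) (ι := KeelB P)).span_eq
  rw [hrange, Submodule.span_image, hbasis, Submodule.map_top, Submodule.range_mkQ]

theorem mk_keelQuad (p q r s : P) :
    (Submodule.Quotient.mk (keelQuad p q r s) : KeelModule P) =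
      ∑ S ∈ Finset.univ.filter (fun S : KeelB P => p ∈ (S : Finset P) ∧ q ∈ (S : Finset P) ∧
        r ∉ (S : Finset P) ∧ s ∉ (S : Finset P)), keelClass S :=
  map_sum (Submodule.span ℤ (keelRels P)).mkQ _ _

theorem mk_keelQuad_swap {p q r s : P} (hpq : p ≠ q) (hpr : p ≠ r) (hps : p ≠ s) (hqr : q ≠ r)
    (hqs : q ≠ s) (hrs : r ≠ s) :
    (Submodule.Quotient.mk (keelQuad p q r s) : KeelModule P) =
      Submodule.Quotient.mk (keelQuad p r q s) :=
  (Submodule.Quotient.eq _).2 <| Submodule.subset_span <|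
    .inr ⟨p, q, r, s, hpq, hpr, hps, hqr, hqs, hrs, .inl rfl⟩

/-- The submodule of the Keel module generated by the classes of the `S ∈ B(P)` with `i ∈ S` and
`|S| ≤ n - 3`: those that contain `i` and whose complement is not a pair. -/
noncomputable def keelNonpairSpan (i : P) : Submodule ℤ (KeelModule P) :=
  Submodule.span ℤ (keelClass '' {S : KeelB P | i ∈ (S : Finset P) ∧
    (S : Finset P).card ≤ Fintype.card P - 3})

theorem keelClass_mem_keelNonpairSpan {i : P} {S : KeelB P} (hi : i ∈ (S : Finset P))
    (hS : (S : Finset P).card ≤ Fintype.card P - 3) : keelClass S ∈ keelNonpairSpan i :=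
  Submodule.subset_span ⟨S, ⟨hi, hS⟩, rfl⟩

theorem keelClass_mem_keelNonpairSpan_of_notMem {i : P} {S : KeelB P} (hi : i ∉ (S : Finset P))
    (hS : (S : Finset P).card ≠ 2) : keelClass S ∈ keelNonpairSpan i := by
  rw [← keelClass_compl]
  apply keelClass_mem_keelNonpairSpan
  · rwa [KeelB.coe_compl, Finset.mem_compl]
  · have := S.2.1
    rw [KeelB.coe_compl, Finset.card_compl]
    omega

theorem mk_keelQuad_smodEq_keelClass {i a b c : P} {T : KeelB P} (hT : (T : Finset P) = {b, c})
    (hi : i ∉ (T : Finset P)) (ha : a ∉ (T : Finset P)) :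
    Submodule.Quotient.mk (keelQuad i a b c) ≡ keelClass T [SMOD keelNonpairSpan i] := by
  have hmem : T.compl ∈ Finset.univ.filter (fun S : KeelB P => i ∈ (S : Finset P) ∧
      a ∈ (S : Finset P) ∧ b ∉ (S : Finset P) ∧ c ∉ (S : Finset P)) := by
    simp_all [KeelB.coe_compl]
  rw [SModEq.sub_mem, mk_keelQuad, ← Finset.add_sum_erase _ _ hmem, keelClass_compl,
    add_sub_cancel_left]
  refine Submodule.sum_mem _ fun S hS => ?_
  simp only [Finset.mem_erase, Finset.mem_filter_univ] at hS
  obtain ⟨hne, hiS, -, hbS, hcS⟩ := hS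
  have hdisj : Disjoint (S : Finset P) T := by simp [hT, hbS, hcS]
  have hlt := (KeelB.eq_compl_or_card_add_card_lt hdisj).resolve_left hne
  have := T.2.1
  exact keelClass_mem_keelNonpairSpan hiS (by omega)

theorem keelClass_smodEq_of_common_mem {i a b c : P} {T U : KeelB P}
    (hT : (T : Finset P) = {b, c}) (hU : (U : Finset P) = {a, c})
    (hiT : i ∉ (T : Finset P)) (hiU : i ∉ (U : Finset P)) :
    keelClass T ≡ keelClass U [SMOD keelNonpairSpan i] := by
  obtain rfl | hab := eq_or_ne a b
  · rw [Subtype.ext (hT.trans hU.symm)]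
  have hbc : b ≠ c := T.ne_of_coe_eq_pair hT
  have hac : a ≠ c := U.ne_of_coe_eq_pair hU
  have haT : a ∉ (T : Finset P) := by simp [hT, hab, hac]
  have hbU : b ∉ (U : Finset P) := by simp [hU, hab.symm, hbc]
  have hia : i ≠ a := by rintro rfl; simp [hU] at hiU
  have hib : i ≠ b := by rintro rfl; simp [hT] at hiT
  have hic : i ≠ c := by rintro rfl; simp [hT] at hiT
  calc keelClass T
      ≡ Submodule.Quotient.mk (keelQuad i a b c) [SMOD keelNonpairSpan i] :=
        (mk_keelQuad_smodEq_keelClass hT hiT haT).symm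
    _ = Submodule.Quotient.mk (keelQuad i b a c) := mk_keelQuad_swap hia hib hic hab hac hbc
    _ ≡ keelClass U [SMOD keelNonpairSpan i] := mk_keelQuad_smodEq_keelClass hU hiU hbU

theorem keelClass_smodEq_of_card_eq_two {i : P} {T U : KeelB P} (hT : (T : Finset P).card = 2)
    (hU : (U : Finset P).card = 2) (hiT : i ∉ (T : Finset P)) (hiU : i ∉ (U : Finset P)) :
    keelClass T ≡ keelClass U [SMOD keelNonpairSpan i] := by
  obtain ⟨a, b, -, hTab⟩ := Finset.card_eq_two.1 hT
  obtain ⟨c, d, -, hUcd⟩ := Finset.card_eq_two.1 hU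
  obtain rfl | hbc := eq_or_ne b c
  · exact keelClass_smodEq_of_common_mem hTab (hUcd.trans (Finset.pair_comm b d)) hiT hiU
  let W : KeelB P := ⟨{c, b}, by simpa only [Finset.card_pair hbc.symm, hT] using T.2⟩
  have hiW : i ∉ (W : Finset P) := by simp_all [W]
  exact (keelClass_smodEq_of_common_mem hTab rfl hiT hiW).trans
    (keelClass_smodEq_of_common_mem (Finset.pair_comm c b) (hUcd.trans (Finset.pair_comm c d))
      hiW hiU)

theorem keelClass_mem_keelNonpairSpan_sup_span {i : P} {T : KeelB P}
    (hT : (T : Finset P).card = 2) (hiT : i ∉ (T : Finset P)) (S : KeelB P) :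
    keelClass S ∈ keelNonpairSpan i ⊔ Submodule.span ℤ {keelClass T} := by
  wlog hiS : i ∉ (S : Finset P) generalizing S
  · rw [← keelClass_compl S]
    exact this S.compl (by simpa [KeelB.coe_compl] using hiS)
  by_cases hS : (S : Finset P).card = 2
  · rw [← sub_add_cancel (keelClass S) (keelClass T)]
    exact Submodule.add_mem_sup
      (SModEq.sub_mem.1 (keelClass_smodEq_of_card_eq_two hS hT hiS hiT))
      (Submodule.mem_span_singleton_self _)
  · exact Submodule.mem_sup_left (keelClass_mem_keelNonpairSpan_of_notMem hiS hS)

theorem keelNonpairSpan_sup_span_keelClass {i : P} {T : KeelB P}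
    (hT : (T : Finset P).card = 2) (hiT : i ∉ (T : Finset P)) :
    keelNonpairSpan i ⊔ Submodule.span ℤ {keelClass T} = ⊤ := by
  rw [eq_top_iff, ← span_range_keelClass, Submodule.span_le]
  exact Set.range_subset_iff.2 (keelClass_mem_keelNonpairSpan_sup_span hT hiT)

end

/-- Generation step of Proposition 4.2: the classes `δ_S` with `i ∈ S` and
`2 ≤ |S| ≤ n - 3`, together with `δ_{{j,k}}`, generate the Keel module over ℤ. -/
theorem keelModule_generation (P : Type*) [Fintype P] [DecidableEq P]
    (hn : 4 ≤ Fintype.card P) (i j k : P) (hij : i ≠ j) (hik : i ≠ k) (hjk : j ≠ k) :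
    Submodule.span ℤ
      ((keelClass '' {S : KeelB P | i ∈ (S : Finset P) ∧
          (S : Finset P).card ≤ Fintype.card P - 3}) ∪
        {keelClass (⟨{j, k}, by rw [Finset.card_pair hjk]; omega⟩ : KeelB P)}) = ⊤ := by
  rw [Submodule.span_union]
  exact keelNonpairSpan_sup_span_keelClass (Finset.card_pair hjk) (by simp [hij, hik])
end

section
/- The Keel module V_P is a free ℤ-module of rank 2^{n−1} − n(n−1)/2 − 1; equivalently, the ℚ-vector space V_P ⊗ ℚ has dimension 2^{n−1} − C(n,2) − 1. (This is the rank statement of Proposition 4.2: rank H²( M̄_{0,P}; ℤ) = rank A¹( M̄_{0,P}) = 2^{n−1} − C(n,2) − 1.) -/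
/-!
Fix a point `w` and write `[A | B]` for the sum of the classes `e_S` over the `S` which contain `A`
and avoid `B`. For complement-invariant classes all four-point relations follow from those involving
`w`, and these say that `[A | w]` is the same for all pairs `A` avoiding `w`. Since `[A | w]` is
`e_A` plus classes of larger sets, the relations can be solved for every `e_A` but one, say `e_D`.
Representing each class by the member of `{S, Sᶜ}` avoiding `w`, it follows that `e_D` and the `e_T`
with `T ⊊ P ∖ {w}` and `|T| ≥ 3` form a basis, and there are
`1 + (2^(n-1) - 1 - 1 - (n-1) - C(n-1,2)) = 2^(n-1) - C(n,2) - 1` of them.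
-/

open Finset

section SplitSum

variable {P M : Type*} [Fintype P] [DecidableEq P]

/-- The sum `[A | B]` of `c S` over the subsets `S` which contain `A` and are disjoint from `B`. -/
def splitSum [AddCommMonoid M] (c : Finset P → M) (A B : Finset P) : M :=
  ∑ S ∈ Icc A Bᶜ, c S

theorem splitSum_comm_of_compl [AddCommMonoid M] {c : Finset P → M} (hc : ∀ S, c Sᶜ = c S)
    (A B : Finset P) : splitSum c A B = splitSum c B A := by
  refine sum_bij' (fun S _ ↦ Sᶜ) (fun S _ ↦ Sᶜ) ?_ ?_ (by simp) (by simp) fun S _ ↦ (hc S).symm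
  all_goals
    intro S hS
    rw [mem_Icc] at hS ⊢
    exact ⟨le_compl_comm.mp hS.2, compl_le_compl hS.1⟩

theorem splitSum_insert_add_splitSum_insert [AddCommMonoid M] (c : Finset P → M) (x : P)
    (A B : Finset P) :
    splitSum c (insert x A) B + splitSum c A (insert x B) = splitSum c A B := by
  have mem_part : {S ∈ Icc A Bᶜ | x ∈ S} = Icc (insert x A) Bᶜ := by
    ext S
    simp only [mem_filter, mem_Icc, insert_subset_iff]
    tauto
  have notMem_part : {S ∈ Icc A Bᶜ | x ∉ S} = Icc A (insert x B)ᶜ := by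
    ext S
    simp only [mem_filter, mem_Icc, subset_compl_comm (s := S), insert_subset_iff,
      mem_compl]
    tauto
  rw [splitSum, splitSum, splitSum, ← mem_part, ← notMem_part, sum_filter_add_sum_filter_not]

theorem mem_Icc_pair_compl_pair {p q r s : P} {S : Finset P} :
    S ∈ Icc {p, q} {r, s}ᶜ ↔ p ∈ S ∧ q ∈ S ∧ r ∉ S ∧ s ∉ S := by
  simp only [mem_Icc, subset_compl_comm (s := S), insert_subset_iff, singleton_subset_iff,
    mem_compl, and_assoc]

variable [AddCommGroup M] {c : Finset P → M} {w : P}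

/-- The four-point condition `[p q | r s] = [p r | q s]`. -/
def FourPoint (c : Finset P → M) : Prop :=
  ∀ ⦃p q r s : P⦄, p ≠ q → p ≠ r → p ≠ s → q ≠ r → q ≠ s → r ≠ s →
    splitSum c {p, q} {r, s} = splitSum c {p, r} {q, s}

theorem splitSum_pair_base_eq_iff (p q r : P) :
    splitSum c {p, q} {r, w} = splitSum c {p, r} {q, w} ↔
      splitSum c {p, q} {w} = splitSum c {p, r} {w} := by
  have split_pq := splitSum_insert_add_splitSum_insert c r {p, q} {w}
  have split_pr := splitSum_insert_add_splitSum_insert c q {p, r} {w}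
  have triple : insert r ({p, q} : Finset P) = insert q {p, r} := by grind
  rw [← split_pq, ← split_pr, triple, add_right_inj]

-- Refine every sum according to the side of the missing fifth point: the terms of type `3 | 2`
-- with `w` on the small side cancel in the sum of the two hypotheses.
theorem splitSum_four_point_of_base (hc : ∀ S, c Sᶜ = c S) {p q r s : P}
    (hp : splitSum c {p, q} {r, w} = splitSum c {p, r} {q, w})
    (hs : splitSum c {s, r} {q, w} = splitSum c {s, q} {r, w}) :
    splitSum c {p, q} {r, s} = splitSum c {p, r} {q, s} := by
  have split := splitSum_insert_add_splitSum_insert c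
  have rotate (x y z : P) : insert x ({y, z} : Finset P) = insert z {y, x} := by grind
  rw [← split s, ← split s {p, r}, rotate s r w, rotate s q w, insert_comm s p,
    insert_comm s p] at hp
  rw [← split p, ← split p {s, q}, rotate p q w, rotate p r w, pair_comm q p, pair_comm r p] at hs
  rw [pair_comm s q, pair_comm s r] at hp hs
  rw [← split w, ← split w {p, r}, splitSum_comm_of_compl hc (insert w {p, q}),
    splitSum_comm_of_compl hc (insert w {p, r})]
  linear_combination (norm := abel) hp + hs

theorem fourPoint_of_base (hc : ∀ S, c Sᶜ = c S)
    (hbase : ∀ p q r, p ≠ q → p ≠ r → q ≠ r → p ≠ w → q ≠ w → r ≠ w →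
      splitSum c {p, q} {r, w} = splitSum c {p, r} {q, w}) : FourPoint c := by
  intro p q r s hpq hpr hps hqr hqs hrs
  have hcomm := splitSum_comm_of_compl hc
  by_cases hsw : s = w
  · subst hsw
    exact hbase p q r hpq hpr hqr hps hqs hrs
  by_cases hrw : r = w
  · subst hrw
    rw [hcomm {p, r}, pair_comm p q, pair_comm r s]
    exact hbase q p s hpq.symm hqs hps hqr hpr hrs.symm
  by_cases hqw : q = w
  · subst hqw
    rw [hcomm {p, q}, pair_comm p r, pair_comm q s]
    exact hbase r s p hrs hpr.symm hps.symm hqr.symm hqs.symm hpq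
  by_cases hpw : p = w
  · subst hpw
    rw [hcomm {p, q}, hcomm {p, r}, pair_comm r s, pair_comm p q, pair_comm q s, pair_comm p r]
    exact hbase s r q hrs.symm hqs.symm hqr.symm hsw hrw hqw
  exact splitSum_four_point_of_base hc (hbase p q r hpq hpr hqr hpw hqw hrw)
    (hbase s r q hrs.symm hqs.symm hqr.symm hsw hrw hqw)

theorem FourPoint.splitSum_pair_eq (h : FourPoint c) {p q r : P} (hpq : p ≠ q) (hpr : p ≠ r)
    (hp : p ≠ w) (hq : q ≠ w) (hr : r ≠ w) :
    splitSum c {p, q} {w} = splitSum c {p, r} {w} := by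
  obtain rfl | hqr := eq_or_ne q r
  · rfl
  · exact (splitSum_pair_base_eq_iff p q r).mp (h hpq hpr hp hqr hq hr)

theorem FourPoint.splitSum_eq_of_card_eq_two (h : FourPoint c) {A B : Finset P} (hA : #A = 2)
    (hB : #B = 2) (hwA : w ∉ A) (hwB : w ∉ B) : splitSum c A {w} = splitSum c B {w} := by
  obtain ⟨p, q, hpq, rfl⟩ := card_eq_two.mp hA
  obtain ⟨r, s, hrs, rfl⟩ := card_eq_two.mp hB
  simp only [mem_insert, mem_singleton, not_or] at hwA hwB
  obtain ⟨hp, hq⟩ := hwA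
  obtain ⟨hr, hs⟩ := hwB
  obtain rfl | hpr := eq_or_ne p r
  · exact h.splitSum_pair_eq hpq hrs (Ne.symm hp) (Ne.symm hq) (Ne.symm hs)
  · calc
      splitSum c {p, q} {w} = splitSum c {p, r} {w} :=
        h.splitSum_pair_eq hpq hpr (Ne.symm hp) (Ne.symm hq) (Ne.symm hr)
      _ = splitSum c {r, p} {w} := by rw [pair_comm]
      _ = splitSum c {r, s} {w} :=
        h.splitSum_pair_eq hpr.symm hrs (Ne.symm hr) (Ne.symm hp) (Ne.symm hs)

theorem fourPoint_of_splitSum_eq (hc : ∀ S, c Sᶜ = c S) {a : M}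
    (ha : ∀ A : Finset P, #A = 2 → w ∉ A → splitSum c A {w} = a) : FourPoint c := by
  refine fourPoint_of_base (w := w) hc fun p q r hpq hpr _ hp hq hr ↦
    (splitSum_pair_base_eq_iff p q r).mpr ?_
  rw [ha _ (card_pair hpq) (by simp [hp.symm, hq.symm]),
    ha _ (card_pair hpr) (by simp [hp.symm, hr.symm])]

end SplitSum

section UniversalProperty

variable {P M : Type*} [Fintype P] [DecidableEq P] [AddCommGroup M]

/-- Functions on subsets satisfying the Keel relations; equivalently, homomorphisms from the Keel
module. They are extended by zero from `B(P)` to all subsets, so that the sums in the four-point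
relations range over full intervals of the subset lattice. -/
structure IsKeelFunction (c : Finset P → M) : Prop where
  eq_zero : ∀ S : Finset P, ¬(2 ≤ #S ∧ #S ≤ Fintype.card P - 2) → c S = 0
  map_compl : ∀ S, c Sᶜ = c S
  fourPoint : FourPoint c

theorem map_keelQuad {φ : (KeelB P →₀ ℤ) →ₗ[ℤ] M} {c : Finset P → M}
    (hφ : ∀ S : KeelB P, φ (Finsupp.single S 1) = c S)
    (hc : ∀ S : Finset P, ¬(2 ≤ #S ∧ #S ≤ Fintype.card P - 2) → c S = 0) (p q r s : P) :
    φ (keelQuad p q r s) = splitSum c {p, q} {r, s} := by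
  rw [keelQuad, map_sum, splitSum]
  refine sum_bij_ne_zero (fun S _ _ ↦ S.1) ?_ (fun _ _ _ _ _ _ ↦ Subtype.ext) ?_
    fun S _ _ ↦ hφ S
  · intro S hS _
    exact mem_Icc_pair_compl_pair.mpr (mem_filter.mp hS).2
  · intro S hS hcS
    have hSB : 2 ≤ #S ∧ #S ≤ Fintype.card P - 2 := not_imp_comm.mp (hc S) hcS
    refine ⟨⟨S, hSB⟩, ?_, by rwa [hφ], rfl⟩
    exact mem_filter.mpr ⟨mem_univ _, mem_Icc_pair_compl_pair.mp hS⟩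

/-- The homomorphism from the Keel module which sends each `e_S` to `c S`. -/
noncomputable def IsKeelFunction.lift {c : Finset P → M} (hc : IsKeelFunction c) :
    KeelModule P →ₗ[ℤ] M :=
  Submodule.liftQ _ (Finsupp.linearCombination ℤ fun S : KeelB P ↦ c S) <| by
    have map_quad := map_keelQuad (φ := Finsupp.linearCombination ℤ fun S : KeelB P ↦ c S)
      (fun S ↦ by simp) hc.eq_zero
    rw [Submodule.span_le]
    rintro x (⟨S, rfl⟩ | ⟨p, q, r, s, hpq, hpr, hps, hqr, hqs, hrs, rfl | rfl⟩)
    · simp [KeelB.compl, hc.map_compl]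
    · simpa [map_quad, sub_eq_zero] using hc.fourPoint hpq hpr hps hqr hqs hrs
    · simpa [map_quad, sub_eq_zero, pair_comm s r] using
        hc.fourPoint hpq hps hpr hqs hqr hrs.symm

/-- The class `e_S` of the boundary divisor of `S`, extended by zero to the subsets outside
`B(P)`. -/
noncomputable def boundaryClass (S : Finset P) : KeelModule P :=
  if h : 2 ≤ #S ∧ #S ≤ Fintype.card P - 2 then keelClass ⟨S, h⟩ else 0

theorem boundaryClass_coe (S : KeelB P) : boundaryClass (S : Finset P) = keelClass S :=
  dif_pos S.2

theorem IsKeelFunction.lift_boundaryClass {c : Finset P → M} (hc : IsKeelFunction c)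
    (S : Finset P) : hc.lift (boundaryClass S) = c S := by
  by_cases hS : 2 ≤ #S ∧ #S ≤ Fintype.card P - 2
  · simp [boundaryClass, hS, keelClass, lift]
  · simp [boundaryClass, hS, hc.eq_zero S hS]

theorem boundaryClass_compl (S : Finset P) : boundaryClass Sᶜ = boundaryClass S := by
  have compl_mem (T : Finset P) (hT : 2 ≤ #T ∧ #T ≤ Fintype.card P - 2) :
      2 ≤ #Tᶜ ∧ #Tᶜ ≤ Fintype.card P - 2 := (KeelB.compl ⟨T, hT⟩).2
  by_cases hS : 2 ≤ #S ∧ #S ≤ Fintype.card P - 2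
  · rw [boundaryClass, boundaryClass, dif_pos hS, dif_pos (compl_mem S hS)]
    exact ((Submodule.Quotient.eq _).mpr (Submodule.subset_span (.inl ⟨⟨S, hS⟩, rfl⟩))).symm
  · have hSc : ¬(2 ≤ #Sᶜ ∧ #Sᶜ ≤ Fintype.card P - 2) := fun h ↦
      hS (by simpa only [compl_compl] using compl_mem Sᶜ h)
    rw [boundaryClass, boundaryClass, dif_neg hS, dif_neg hSc]

theorem isKeelFunction_boundaryClass : IsKeelFunction (boundaryClass (P := P)) where
  eq_zero _ hS := dif_neg hS
  map_compl := boundaryClass_compl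
  fourPoint p q r s hpq hpr hps hqr hqs hrs := by
    have mk_quad := map_keelQuad (φ := (Submodule.span ℤ (keelRels P)).mkQ)
      (fun S ↦ (boundaryClass_coe S).symm) fun _ hS ↦ dif_neg hS
    rw [← mk_quad, ← mk_quad]
    exact (Submodule.Quotient.eq _).mpr (Submodule.subset_span
      (.inr ⟨p, q, r, s, hpq, hpr, hps, hqr, hqs, hrs, .inl rfl⟩))

theorem eq_top_of_boundaryClass_mem {N : Submodule ℤ (KeelModule P)}
    (hN : ∀ S, boundaryClass S ∈ N) : N = ⊤ := by
  refine Submodule.eq_top_iff'.mpr fun x ↦ ?_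
  obtain ⟨x, rfl⟩ := Submodule.Quotient.mk_surjective _ x
  induction x using Finsupp.induction_linear with
  | zero => exact N.zero_mem
  | add x y hx hy => exact N.add_mem hx hy
  | single S a =>
    have hS : keelClass S ∈ N := boundaryClass_coe S ▸ hN S
    rw [← Finsupp.smul_single_one]
    exact N.smul_mem a hS

end UniversalProperty

section Basis

variable {P M : Type*} [Fintype P] [DecidableEq P] [AddCommGroup M] {w : P} {D : Finset P}

/-- The labels of the basis of the Keel module attached to a point `w` and a pair `D` avoiding `w`:
the pair `D` itself, and the proper subsets of `P ∖ {w}` with at least three elements. -/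
def keelBasisIndex (w : P) (D : Finset P) : Finset (Finset P) :=
  insert D {T ∈ ({w}ᶜ : Finset P).ssubsets | 3 ≤ #T}

/-- The values on the subsets avoiding `w` of the Keel function which extends the restriction of `f`
to `keelBasisIndex w D`. The values on pairs `T` are forced by `[T | w] = [D | w]`. -/
def keelExtensionAvoiding (w : P) (D : Finset P) (f : Finset P → M) (T : Finset P) : M :=
  if #T = 2 then ∑ U ∈ Ico D {w}ᶜ, f U - ∑ U ∈ Ioo T {w}ᶜ, f U
  else if 3 ≤ #T ∧ T ⊂ {w}ᶜ then f T else 0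

/-- The Keel function which extends the restriction of `f` to `keelBasisIndex w D`. -/
def keelExtension (w : P) (D : Finset P) (f : Finset P → M) (S : Finset P) : M :=
  keelExtensionAvoiding w D f (if w ∈ S then Sᶜ else S)

theorem keelExtension_of_notMem (f : Finset P → M) {T : Finset P} (hT : w ∉ T) :
    keelExtension w D f T = keelExtensionAvoiding w D f T := by
  rw [keelExtension, if_neg hT]

theorem keelExtension_compl (f : Finset P → M) (S : Finset P) :
    keelExtension w D f Sᶜ = keelExtension w D f S := by
  by_cases hw : w ∈ S <;> simp [keelExtension, hw]

theorem keelExtension_of_card_eq_two (f : Finset P → M) {T : Finset P} (hT : #T = 2)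
    (hw : w ∉ T) : keelExtension w D f T = ∑ U ∈ Ico D {w}ᶜ, f U - ∑ U ∈ Ioo T {w}ᶜ, f U := by
  rw [keelExtension_of_notMem f hw, keelExtensionAvoiding, if_pos hT]

theorem keelExtension_of_three_le (f : Finset P → M) {T : Finset P} (hT : T ⊂ {w}ᶜ)
    (hcard : 3 ≤ #T) : keelExtension w D f T = f T := by
  have hw : w ∉ T := fun h ↦ by simpa using hT.subset h
  rw [keelExtension_of_notMem f hw, keelExtensionAvoiding, if_neg (by lia), if_pos ⟨hcard, hT⟩]

theorem keelExtension_eq_zero (hP : 4 ≤ Fintype.card P) (f : Finset P → M) (S : Finset P)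
    (hS : ¬(2 ≤ #S ∧ #S ≤ Fintype.card P - 2)) : keelExtension w D f S = 0 := by
  have hbase : #({w}ᶜ : Finset P) = Fintype.card P - 1 := by simp [card_compl]
  have hcard := card_compl S
  have hle := card_le_univ S
  set T := if w ∈ S then Sᶜ else S with hT
  have hTB : ¬(2 ≤ #T ∧ #T ≤ Fintype.card P - 2) := by grind
  rw [keelExtension, keelExtensionAvoiding, ← hT,
    if_neg fun hpair ↦ hTB ⟨hpair.ge, by lia⟩, if_neg]
  rintro ⟨hthree, hssub⟩
  have hlt := card_lt_card hssub
  exact hTB ⟨by lia, by lia⟩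

theorem keelExtension_compl_singleton (hP : 4 ≤ Fintype.card P) (f : Finset P → M) :
    keelExtension w D f {w}ᶜ = 0 :=
  keelExtension_eq_zero hP f _ (by simp only [card_compl, card_singleton]; lia)

theorem ssubset_compl_singleton_of_card_eq_two (hP : 4 ≤ Fintype.card P) {T : Finset P}
    (hT : #T = 2) (hw : w ∉ T) : T ⊂ {w}ᶜ := by
  refine (subset_compl_singleton.mpr hw).ssubset_of_ne fun h ↦ ?_
  rw [h, card_compl, card_singleton] at hT
  lia

theorem splitSum_keelExtension (hP : 4 ≤ Fintype.card P) (f : Finset P → M) {T : Finset P}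
    (hT : #T = 2) (hw : w ∉ T) :
    splitSum (keelExtension w D f) T {w} = ∑ U ∈ Ico D {w}ᶜ, f U := by
  have hTw := ssubset_compl_singleton_of_card_eq_two hP hT hw
  have larger : ∑ U ∈ Ioo T {w}ᶜ, keelExtension w D f U = ∑ U ∈ Ioo T {w}ᶜ, f U := by
    refine sum_congr rfl fun U hU ↦ ?_
    rw [mem_Ioo] at hU
    exact keelExtension_of_three_le f hU.2 (hT.symm.trans_lt (card_lt_card hU.1))
  rw [splitSum, ← sum_Ico_add_eq_sum_Icc hTw.le, ← add_sum_Ioo_eq_sum_Ico hTw, larger,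
    keelExtension_of_card_eq_two f hT hw, keelExtension_compl_singleton hP, sub_add_cancel,
    add_zero]

theorem isKeelFunction_keelExtension (hP : 4 ≤ Fintype.card P) (f : Finset P → M) :
    IsKeelFunction (keelExtension w D f) where
  eq_zero := keelExtension_eq_zero hP f
  map_compl := keelExtension_compl f
  fourPoint := fourPoint_of_splitSum_eq (keelExtension_compl f)
    fun _ hA hwA ↦ splitSum_keelExtension hP f hA hwA

theorem keelExtension_of_mem_keelBasisIndex (hP : 4 ≤ Fintype.card P) (hD : #D = 2) (hw : w ∉ D)
    (f : Finset P → M) {T : Finset P} (hT : T ∈ keelBasisIndex w D) :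
    keelExtension w D f T = f T := by
  rw [keelBasisIndex, mem_insert, mem_filter, mem_ssubsets] at hT
  obtain rfl | ⟨hTw, hcard⟩ := hT
  · rw [keelExtension_of_card_eq_two f hD hw,
      ← add_sum_Ioo_eq_sum_Ico (ssubset_compl_singleton_of_card_eq_two hP hD hw),
      add_sub_cancel_right]
  · exact keelExtension_of_three_le f hTw hcard

theorem linearIndependent_boundaryClass (hP : 4 ≤ Fintype.card P) (hD : #D = 2) (hw : w ∉ D) :
    LinearIndependent ℤ fun T : keelBasisIndex w D ↦ boundaryClass (T : Finset P) := by
  let f : Finset P → Finset P →₀ ℤ := fun T ↦ Finsupp.single T 1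
  have hf : LinearIndependent ℤ f := Finsupp.linearIndependent_single_one ℤ (Finset P)
  have hc := isKeelFunction_keelExtension (w := w) (D := D) hP f
  have lift_comp : hc.lift ∘ (fun T : keelBasisIndex w D ↦ boundaryClass (T : Finset P)) =
      f ∘ (↑) := funext fun T ↦
    (hc.lift_boundaryClass _).trans (keelExtension_of_mem_keelBasisIndex hP hD hw f T.2)
  refine LinearIndependent.of_comp hc.lift ?_
  rw [lift_comp]
  exact hf.comp _ Subtype.val_injective

/-- The span of the classes labelled by `keelBasisIndex w D`. -/
noncomputable abbrev keelBasisSpan (w : P) (D : Finset P) : Submodule ℤ (KeelModule P) :=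
  Submodule.span ℤ (Set.range fun T : keelBasisIndex w D ↦ boundaryClass (T : Finset P))

theorem boundaryClass_mem_span_of_three_le {T : Finset P} (hw : w ∉ T) (hcard : 3 ≤ #T) :
    boundaryClass T ∈ keelBasisSpan w D := by
  obtain rfl | hT := (subset_compl_singleton.mpr hw).eq_or_ssubset
  · have hzero : boundaryClass ({w}ᶜ : Finset P) = 0 := by
      rw [boundaryClass_compl]
      exact isKeelFunction_boundaryClass.eq_zero _ (by simp)
    exact hzero ▸ Submodule.zero_mem _
  · exact Submodule.subset_span ⟨⟨T, by simp [keelBasisIndex, hT, hcard]⟩, rfl⟩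

theorem sum_Ioc_boundaryClass_mem_span {T : Finset P} (hT : #T = 2) :
    ∑ U ∈ Ioc T {w}ᶜ, boundaryClass U ∈ keelBasisSpan w D := by
  refine Submodule.sum_mem _ fun U hU ↦ ?_
  rw [mem_Ioc] at hU
  exact boundaryClass_mem_span_of_three_le (subset_compl_singleton.mp hU.2)
    (hT.symm.trans_lt (card_lt_card hU.1))

theorem boundaryClass_mem_span_of_card_eq_two (hD : #D = 2) (hwD : w ∉ D) {T : Finset P}
    (hT : #T = 2) (hw : w ∉ T) : boundaryClass T ∈ keelBasisSpan w D := by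
  have hD_mem : boundaryClass D ∈ keelBasisSpan w D :=
    Submodule.subset_span ⟨⟨D, mem_insert_self _ _⟩, rfl⟩
  have hpair : splitSum boundaryClass T {w} = splitSum boundaryClass D {w} :=
    isKeelFunction_boundaryClass.fourPoint.splitSum_eq_of_card_eq_two hT hD hw hwD
  rw [splitSum, splitSum, ← add_sum_Ioc_eq_sum_Icc (subset_compl_singleton.mpr hw),
    ← add_sum_Ioc_eq_sum_Icc (subset_compl_singleton.mpr hwD)] at hpair
  rw [eq_sub_of_add_eq hpair]
  exact Submodule.sub_mem _ (Submodule.add_mem _ hD_mem (sum_Ioc_boundaryClass_mem_span hD))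
    (sum_Ioc_boundaryClass_mem_span hT)

theorem keelBasisSpan_eq_top (hD : #D = 2) (hwD : w ∉ D) : keelBasisSpan w D = ⊤ := by
  have avoiding (T : Finset P) (hw : w ∉ T) : boundaryClass T ∈ keelBasisSpan w D := by
    obtain hT | hT | hT : #T < 2 ∨ #T = 2 ∨ 3 ≤ #T := by lia
    · rw [isKeelFunction_boundaryClass.eq_zero T (by lia)]
      exact Submodule.zero_mem _
    · exact boundaryClass_mem_span_of_card_eq_two hD hwD hT hw
    · exact boundaryClass_mem_span_of_three_le hw hT
  refine eq_top_of_boundaryClass_mem fun S ↦ ?_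
  by_cases hw : w ∈ S
  · exact boundaryClass_compl S ▸ avoiding Sᶜ (notMem_compl.mpr hw)
  · exact avoiding S hw

/-- The basis of the Keel module consisting of the boundary classes labelled by
`keelBasisIndex w D`. -/
noncomputable def keelBasis (hP : 4 ≤ Fintype.card P) (hD : #D = 2) (hw : w ∉ D) :
    Module.Basis (keelBasisIndex w D) ℤ (KeelModule P) :=
  .mk (linearIndependent_boundaryClass hP hD hw) (keelBasisSpan_eq_top hD hw).ge

end Basis

section Counting

theorem card_filter_card_lt_three_powerset {α : Type*} (s : Finset α) :
    #{T ∈ s.powerset | #T < 3} = 1 + #s + (#s).choose 2 := by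
  rw [card_eq_sum_card_fiberwise (f := card) (t := range 3) fun T hT ↦ by simp_all]
  have fiber (k : ℕ) (hk : k ∈ range 3) :
      #{T ∈ {T ∈ s.powerset | #T < 3} | #T = k} = (#s).choose k := by
    rw [← card_powersetCard, powersetCard_eq_filter, filter_filter]
    congr 1
    grind
  rw [sum_congr rfl fiber]
  simp [sum_range_succ]

theorem card_filter_three_le_ssubsets {α : Type*} [DecidableEq α] {s : Finset α} (hs : 3 ≤ #s) :
    #{T ∈ s.ssubsets | 3 ≤ #T} + (#s + 1).choose 2 + 2 = 2 ^ #s := by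
  have self_mem : s ∈ {T ∈ s.powerset | 3 ≤ #T} := by simp [hs]
  have hproper : {T ∈ s.ssubsets | 3 ≤ #T} = {T ∈ s.powerset | 3 ≤ #T}.erase s := by
    rw [ssubsets, filter_erase]
  have hsplit := card_filter_add_card_filter_not (s := s.powerset) (3 ≤ #·)
  simp only [not_le, card_filter_card_lt_three_powerset, card_powerset] at hsplit
  have herase := card_erase_add_one self_mem
  rw [hproper, Nat.choose_succ_succ', Nat.choose_one_right]
  lia

theorem card_keelBasisIndex {P : Type*} [Fintype P] [DecidableEq P] (hP : 4 ≤ Fintype.card P)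
    {w : P} {D : Finset P} (hD : #D = 2) :
    #(keelBasisIndex w D) = 2 ^ (Fintype.card P - 1) - (Fintype.card P).choose 2 - 1 := by
  have hbase : #({w}ᶜ : Finset P) = Fintype.card P - 1 := by simp [card_compl]
  have hcount := card_filter_three_le_ssubsets (s := ({w}ᶜ : Finset P)) (by lia)
  rw [hbase, Nat.sub_add_cancel (by lia)] at hcount
  rw [keelBasisIndex, card_insert_of_notMem (by simp [hD])]
  lia

end Counting

open TensorProduct in
/-- Rank statement of Proposition 4.2: the Keel module `V_P` is a free ℤ-module of rank
`2^(n-1) - C(n,2) - 1`; equivalently, `V_P ⊗ ℚ` has dimension `2^(n-1) - C(n,2) - 1`. -/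
theorem keelModule_rank (P : Type*) [Fintype P] [DecidableEq P]
    (hn : 4 ≤ Fintype.card P) :
    Module.Free ℤ (KeelModule P) ∧
      Module.finrank ℤ (KeelModule P)
        = 2 ^ (Fintype.card P - 1) - (Fintype.card P).choose 2 - 1 ∧
      Module.finrank ℚ (ℚ ⊗[ℤ] KeelModule P)
        = 2 ^ (Fintype.card P - 1) - (Fintype.card P).choose 2 - 1 := by
  obtain ⟨w, p, q, hwp, hwq, hpq⟩ := Fintype.two_lt_card_iff.mp (show 2 < Fintype.card P by lia)
  have hw : w ∉ ({p, q} : Finset P) := by simp [hwp, hwq]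
  have b := keelBasis hn (card_pair hpq) hw
  have free : Module.Free ℤ (KeelModule P) := .of_basis b
  have rank : Module.finrank ℤ (KeelModule P) =
      2 ^ (Fintype.card P - 1) - (Fintype.card P).choose 2 - 1 := by
    rw [Module.finrank_eq_card_finset_basis b, card_keelBasisIndex hn (card_pair hpq)]
  exact ⟨free, rank, Module.finrank_baseChange.trans rank⟩
end

section
/- There is a strong deformation retraction of |K| ∖ |H| onto |M|: a continuous map F : (|K| ∖ |H|) × [0,1] → |K| ∖ |H| such that F(x,0) = x for all x, F(x,1) ∈ |M| for all x, and F(y,t) = y for all y ∈ |M| and all t ∈ [0,1]. In particular |K| ∖ |H| is homotopy equivalent to |M|. (Lemma 5.4 of the paper, with the explicit retraction given by: writing x in barycentric coordinates x = Σ_{i=0}^{k} λ_i b_{a_i} with respect to a chain a_0 ⊊ ⋯ ⊊ a_k, and letting s be the least index with a_s ∈ L, set x′ = (Σ_{i=s}^{k} λ_i)^{−1} Σ_{i=s}^{k} λ_i b_{a_i} and F(x,t) = (1−t)x + t x′.) -/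
/-- The geometric realization `|K|` of a collection `K` of finite subsets of a finite
vertex set `V`: functions `f : V → ℝ` with nonnegative values summing to `1` whose
support is a simplex of `K`. -/
def KReal {V : Type*} [Fintype V] (K : Set (Finset V)) : Set (V → ℝ) :=
  {f | (∀ v, 0 ≤ f v) ∧ (∑ v, f v) = 1 ∧ ∃ a ∈ K, ∀ v, f v ≠ 0 ↔ v ∈ a}

/-- The barycenter of a simplex `a`, as a point of the geometric realization. -/
noncomputable def bary {V : Type*} [DecidableEq V] (a : Finset V) : V → ℝ :=
  fun v => if v ∈ a then ((a.card : ℝ))⁻¹ else 0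

/-- `|M|`: the union, over all chains of simplices of `L = K ∖ H`, of the convex hulls of
the corresponding sets of barycenters; the geometric realization of the subcomplex `M` of
the first barycentric subdivision of `K` whose vertices are barycenters of simplices
of `L`. -/
def MReal {V : Type*} [Fintype V] [DecidableEq V] (K H : Set (Finset V)) : Set (V → ℝ) :=
  ⋃ (T : Finset (Finset V)) (_ : (T : Set (Finset V)) ⊆ K \ H)
    (_ : IsChain (· ⊆ ·) (T : Set (Finset V))),
    convexHull ℝ (bary '' (T : Set (Finset V)))

/-!
The superlevel sets `{x ≥ s}`, `0 < s ≤ 1`, of a point `x` of the standard simplex form a chain, and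
the layer-cake formula `x v = |{s : v ∈ {x ≥ s}}|` identifies the coefficient of `b_a` in the
barycentric coordinates of `x` as `|a|` times the length of `{s : {x ≥ s} = a}`. That length is the
positive part of `min_a x - max_{aᶜ} x`, hence continuous in `x` on the whole simplex, with no case
distinction on the chain carrying `x`.

For any collection `L` of nonempty simplices, the retraction discards the coefficients with `a ∉ L`
and renormalizes. If the support of `x` lies in `L`, its own coefficient is positive, since the
support is the superlevel set of `x` at small levels; so the renormalization is legitimate, the
support does not change, and the segment from `x` to its image stays inside one open simplex.
Points of `|M|` are fixed because all nonempty superlevel sets of a convex combination of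
barycenters of a chain are members of that chain.
-/

open MeasureTheory Set

section DeformationRetraction

/-- `F` is a strong deformation retraction of the subspace `S` onto its subspace `A`. The homotopy
is a map on the ambient space, of which only the values on `S × [0, 1]` matter. -/
structure IsStrongDeformationRetraction {X : Type*} [TopologicalSpace X] (F : X × ℝ → X)
    (S A : Set X) : Prop where
  subset : A ⊆ S
  continuousOn : ContinuousOn F (S ×ˢ Icc (0 : ℝ) 1)
  mem : ∀ x ∈ S, ∀ t ∈ Icc (0 : ℝ) 1, F (x, t) ∈ S
  apply_zero : ∀ x ∈ S, F (x, 0) = x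
  apply_one_mem : ∀ x ∈ S, F (x, 1) ∈ A
  apply_of_mem : ∀ y ∈ A, ∀ t ∈ Icc (0 : ℝ) 1, F (y, t) = y

theorem IsStrongDeformationRetraction.nonempty_homotopyEquiv {X : Type*} [TopologicalSpace X]
    {F : X × ℝ → X} {S A : Set X} (hF : IsStrongDeformationRetraction F S A) :
    Nonempty (ContinuousMap.HomotopyEquiv S A) := by
  let retraction : C(S, A) :=
    ⟨fun x ↦ ⟨F (x, 1), hF.apply_one_mem x x.2⟩,
      (hF.continuousOn.comp_continuous (by fun_prop)
        fun x : S ↦ ⟨x.2, right_mem_Icc.2 zero_le_one⟩).subtype_mk _⟩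
  let inclusion : C(A, S) := ⟨Set.inclusion hF.subset, continuous_inclusion hF.subset⟩
  let homotopy : (ContinuousMap.id S).Homotopy (inclusion.comp retraction) :=
    { toFun := fun p ↦ ⟨F (p.2, p.1), hF.mem p.2 p.2.2 p.1 p.1.2⟩
      continuous_toFun := (hF.continuousOn.comp_continuous (by fun_prop)
        fun p : unitInterval × S ↦ ⟨p.2.2, p.1.2⟩).subtype_mk _
      map_zero_left := fun x ↦ Subtype.ext (hF.apply_zero x x.2)
      map_one_left := fun _ ↦ rfl }
  have retraction_comp_inclusion : retraction.comp inclusion = ContinuousMap.id A :=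
    ContinuousMap.ext fun y ↦ Subtype.ext (hF.apply_of_mem y y.2 1 (right_mem_Icc.2 zero_le_one))
  exact ⟨⟨retraction, inclusion, ContinuousMap.Homotopic.symm ⟨homotopy⟩,
    retraction_comp_inclusion ▸ ContinuousMap.Homotopic.refl _⟩⟩

theorem isStrongDeformationRetraction_lineMap {E : Type*} [AddCommGroup E] [Module ℝ E]
    [TopologicalSpace E] [IsTopologicalAddGroup E] [ContinuousSMul ℝ E] {S A : Set E} {r : E → E}
    (hAS : A ⊆ S) (hcont : ContinuousOn r S) (hmaps : MapsTo r S A) (hfix : ∀ y ∈ A, r y = y)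
    (hsegment : ∀ x ∈ S, segment ℝ x (r x) ⊆ S) :
    IsStrongDeformationRetraction
      (fun p : E × ℝ ↦ AffineMap.lineMap p.1 (r p.1) p.2) S A where
  subset := hAS
  continuousOn := continuousOn_fst.lineMap (hcont.comp continuousOn_fst fun _ hp ↦ hp.1)
    continuousOn_snd
  mem x hx t ht := hsegment x hx (segment_eq_image_lineMap ℝ x (r x) ▸ mem_image_of_mem _ ht)
  apply_zero x _ := AffineMap.lineMap_apply_zero x (r x)
  apply_one_mem x hx := by simpa only [AffineMap.lineMap_apply_one] using hmaps hx
  apply_of_mem y hy t _ := by simp only [hfix y hy, AffineMap.lineMap_same_apply]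

end DeformationRetraction

section Chain

variable {α : Type*} {T : Set (Finset α)}

theorem exists_least_mem_of_isChain (hT : IsChain (· ⊆ ·) T) {v : α} (hv : ∃ b ∈ T, v ∈ b) :
    ∃ b ∈ T, v ∈ b ∧ ∀ c ∈ T, v ∈ c → b ⊆ c := by
  obtain ⟨b, hb⟩ := exists_minimal_of_wellFoundedLT (fun b ↦ b ∈ T ∧ v ∈ b) hv
  refine ⟨b, hb.prop.1, hb.prop.2, fun c hcT hvc ↦ ?_⟩
  rcases hT.total hb.prop.1 hcT with hbc | hcb
  · exact hbc
  · exact hb.le_of_le ⟨hcT, hvc⟩ hcb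

theorem mem_of_isChain_of_forall_exists_subset (hT : IsChain (· ⊆ ·) T) {a : Finset α}
    (ha : a.Nonempty) (h : ∀ v ∈ a, ∃ b ∈ T, v ∈ b ∧ b ⊆ a) : a ∈ T := by
  obtain ⟨v, hv⟩ := ha
  obtain ⟨b, hbT, -, hba⟩ := h v hv
  have hfinite : {c | c ∈ T ∧ c ⊆ a}.Finite :=
    a.powerset.finite_toSet.subset fun c hc ↦ Finset.mem_powerset.2 hc.2
  obtain ⟨m, -, hm⟩ := hfinite.exists_le_maximal ⟨hbT, hba⟩
  suffices a ⊆ m by simpa only [this.antisymm hm.prop.2] using hm.prop.1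
  intro u hu
  obtain ⟨c, hcT, huc, hca⟩ := h u hu
  rcases hT.total hcT hm.prop.1 with hcm | hmc
  · exact hcm huc
  · exact hm.le_of_ge ⟨hcT, hca⟩ hmc huc

end Chain

section Superlevel

theorem continuous_finset_fold {ι X M : Type*} [TopologicalSpace X] [TopologicalSpace M]
    {op : M → M → M} [Std.Commutative op] [Std.Associative op]
    (hop : Continuous fun p : M × M ↦ op p.1 p.2) {f : ι → X → M} (hf : ∀ i, Continuous (f i))
    (c : M) (s : Finset ι) : Continuous fun x ↦ s.fold op c fun i ↦ f i x := by
  induction s using Finset.cons_induction with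
  | empty => exact continuous_const
  | cons i s hi ih =>
    simp only [Finset.fold_cons hi]
    exact hop.comp ((hf i).prodMk ih)

variable {V : Type*} [Fintype V]

/-- The support of `x`, as a finite set. -/
noncomputable def supp (x : V → ℝ) : Finset V := {v | x v ≠ 0}

/-- The superlevel set `{x ≥ s}`, as a finite set. -/
noncomputable def superlevel (x : V → ℝ) (s : ℝ) : Finset V := {v | s ≤ x v}

/-- The length of the set of levels `s` with `{x ≥ s} = a`. Only `s ∈ (0, 1]` counts: those are the
levels relevant to points of the standard simplex, and the length is then finite for every `a`. -/
noncomputable def levelLength (x : V → ℝ) (a : Finset V) : ℝ :=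
  (volume.restrict (Ioc (0 : ℝ) 1)).real (superlevel x ⁻¹' {a})

@[simp]
theorem mem_supp {x : V → ℝ} {v : V} : v ∈ supp x ↔ x v ≠ 0 := by simp [supp]

@[simp]
theorem mem_superlevel {x : V → ℝ} {s : ℝ} {v : V} : v ∈ superlevel x s ↔ s ≤ x v := by
  simp [superlevel]

theorem antitone_superlevel (x : V → ℝ) : Antitone (superlevel x) := fun _ _ hst _ hv ↦
  mem_superlevel.2 (hst.trans (mem_superlevel.1 hv))

theorem superlevel_subset_supp (x : V → ℝ) {s : ℝ} (hs : 0 < s) : superlevel x s ⊆ supp x :=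
  fun _ hv ↦ mem_supp.2 (hs.trans_le (mem_superlevel.1 hv)).ne'

theorem measurableSet_superlevel_preimage_singleton (x : V → ℝ) (a : Finset V) :
    MeasurableSet (superlevel x ⁻¹' {a}) :=
  (ordConnected_singleton.preimage_anti (antitone_superlevel x)).measurableSet

theorem levelLength_nonneg (x : V → ℝ) (a : Finset V) : 0 ≤ levelLength x a := measureReal_nonneg

theorem exists_superlevel_eq_of_levelLength_ne_zero {x : V → ℝ} {a : Finset V}
    (h : levelLength x a ≠ 0) : ∃ s, 0 < s ∧ superlevel x s = a := by
  rw [levelLength,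
    measureReal_restrict_apply (measurableSet_superlevel_preimage_singleton x a)] at h
  obtain ⟨s, hsa, hs⟩ := nonempty_of_measureReal_ne_zero h
  exact ⟨s, hs.1, hsa⟩

theorem superlevel_preimage_singleton_inter_Ioc [DecidableEq V] (x : V → ℝ) (a : Finset V) :
    superlevel x ⁻¹' {a} ∩ Ioc 0 1 = Ioc (aᶜ.fold max 0 x) (a.fold min 1 x) := by
  ext s
  simp only [mem_inter_iff, mem_preimage, mem_singleton_iff, mem_Ioc, Finset.fold_max_lt,
    Finset.le_fold_min, Finset.ext_iff, mem_superlevel, Finset.mem_compl]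
  grind

theorem levelLength_eq [DecidableEq V] (x : V → ℝ) (a : Finset V) :
    levelLength x a = max (a.fold min 1 x - aᶜ.fold max 0 x) 0 := by
  rw [levelLength, measureReal_restrict_apply (measurableSet_superlevel_preimage_singleton x a),
    superlevel_preimage_singleton_inter_Ioc, Real.volume_real_Ioc]

theorem continuous_levelLength (a : Finset V) : Continuous fun x : V → ℝ ↦ levelLength x a := by
  classical
  simp only [levelLength_eq]
  have continuous_min_on : Continuous fun x : V → ℝ ↦ a.fold min 1 x :=
    continuous_finset_fold continuous_min continuous_apply 1 a
  have continuous_max_off : Continuous fun x : V → ℝ ↦ aᶜ.fold max 0 x :=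
    continuous_finset_fold continuous_max continuous_apply 0 aᶜ
  exact (continuous_min_on.sub continuous_max_off).max continuous_const

theorem levelLength_supp_pos {x : V → ℝ} (hx : ∀ v, 0 ≤ x v) : 0 < levelLength x (supp x) := by
  classical
  have min_on_supp_pos : 0 < (supp x).fold min 1 x :=
    (Finset.lt_fold_min 0).2 ⟨one_pos, fun v hv ↦ (hx v).lt_of_ne' (mem_supp.1 hv)⟩
  have max_off_supp_nonpos : (supp x)ᶜ.fold max 0 x ≤ 0 :=
    (Finset.fold_max_le 0).2 ⟨le_rfl, fun v hv ↦ by simp_all⟩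
  rw [levelLength_eq]
  exact lt_max_of_lt_left (by linarith)

theorem sum_levelLength_filter_mem [DecidableEq V] (x : V → ℝ) {v : V} (hx : x v ∈ Icc (0 : ℝ) 1) :
    ∑ a : Finset V with v ∈ a, levelLength x a = x v := by
  have levels_of_mem :
      superlevel x ⁻¹' ({a | v ∈ a} : Finset (Finset V)) ∩ Ioc 0 1 = Ioc 0 (x v) := by
    ext s
    simp only [Finset.coe_filter, Finset.mem_univ, true_and, preimage_ofPred_eq, mem_superlevel,
      mem_inter_iff, mem_ofPred_eq, mem_Ioc]
    exact ⟨fun h ↦ ⟨h.2.1, h.1⟩, fun h ↦ ⟨h.2, h.1, h.2.trans hx.2⟩⟩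
  simp only [levelLength]
  rw [sum_measureReal_preimage_singleton _
      fun a _ ↦ measurableSet_superlevel_preimage_singleton x a,
    measureReal_restrict_apply' measurableSet_Ioc, levels_of_mem, Real.volume_real_Ioc_of_le hx.1,
    sub_zero]

end Superlevel

section Barycenter

variable {V : Type*} [DecidableEq V]

theorem bary_nonneg (a : Finset V) (v : V) : 0 ≤ bary a v := by
  unfold bary
  positivity

theorem bary_eq_zero_iff {a : Finset V} {v : V} : bary a v = 0 ↔ v ∉ a := by
  by_cases hv : v ∈ a
  · simp [bary, hv, Finset.ne_empty_of_mem hv]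
  · simp [bary, hv]

theorem card_mul_bary (a : Finset V) (v : V) : a.card * bary a v = if v ∈ a then 1 else 0 := by
  by_cases hv : v ∈ a
  · simp [bary, hv, Finset.ne_empty_of_mem hv]
  · simp [bary, hv]

theorem bary_le_bary {a : Finset V} {u v : V} (h : v ∈ a → u ∈ a) : bary a v ≤ bary a u := by
  by_cases hv : v ∈ a
  · simp [bary, hv, h hv]
  · simpa [bary, hv] using bary_nonneg a u

theorem bary_mem_stdSimplex [Fintype V] {a : Finset V} (ha : a.Nonempty) :
    bary a ∈ stdSimplex ℝ V :=
  ⟨bary_nonneg a, by simp [bary, ha.ne_empty]⟩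

theorem le_of_mem_convexHull_bary {T : Set (Finset V)} {y : V → ℝ}
    (hy : y ∈ convexHull ℝ (bary '' T)) {u v : V} (huv : ∀ b ∈ T, v ∈ b → u ∈ b) : y v ≤ y u := by
  have hconvex : Convex ℝ {z : V → ℝ | z v ≤ z u} := fun z hz w hw c d hc hd _ ↦
    add_le_add (mul_le_mul_of_nonneg_left hz hc) (mul_le_mul_of_nonneg_left hw hd)
  refine convexHull_min ?_ hconvex hy
  rintro _ ⟨b, hb, rfl⟩
  exact bary_le_bary (huv b hb)

theorem exists_mem_of_mem_convexHull_bary {T : Set (Finset V)} {y : V → ℝ}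
    (hy : y ∈ convexHull ℝ (bary '' T)) {v : V} (hv : y v ≠ 0) : ∃ b ∈ T, v ∈ b := by
  contrapose! hv
  refine convexHull_min ?_ (convex_hyperplane (LinearMap.proj v : (V → ℝ) →ₗ[ℝ] ℝ).isLinear 0) hy
  rintro _ ⟨b, hb, rfl⟩
  exact bary_eq_zero_iff.2 (hv b hb)

theorem mem_of_mem_convexHull_bary [Fintype V] {T : Set (Finset V)} (hT : IsChain (· ⊆ ·) T)
    {y : V → ℝ} (hy : y ∈ convexHull ℝ (bary '' T)) {a : Finset V} (ha : a.Nonempty)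
    (hsupp : a ⊆ supp y) (hupper : ∀ v ∈ a, ∀ u, y v ≤ y u → u ∈ a) : a ∈ T := by
  refine mem_of_isChain_of_forall_exists_subset hT ha fun v hv ↦ ?_
  obtain ⟨b, hbT, hvb, hleast⟩ := exists_least_mem_of_isChain hT
    (exists_mem_of_mem_convexHull_bary hy (mem_supp.1 (hsupp hv)))
  exact ⟨b, hbT, hvb, fun u hu ↦ hupper v hv u
    (le_of_mem_convexHull_bary hy fun c hcT hvc ↦ hleast c hcT hvc hu)⟩

/-- The geometric realization of the order complex of `L`, i.e. the union of the convex hulls of the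
barycenters of the chains in `L`. Unlike in `MReal`, `L` is an arbitrary collection of simplices. -/
def orderComplexReal (L : Set (Finset V)) : Set (V → ℝ) :=
  ⋃ (T : Finset (Finset V)) (_ : (T : Set (Finset V)) ⊆ L)
    (_ : IsChain (· ⊆ ·) (T : Set (Finset V))), convexHull ℝ (bary '' (T : Set (Finset V)))

theorem mem_orderComplexReal_iff {L : Set (Finset V)} {y : V → ℝ} :
    y ∈ orderComplexReal L ↔ ∃ T : Finset (Finset V), (T : Set (Finset V)) ⊆ L ∧
      IsChain (· ⊆ ·) (T : Set (Finset V)) ∧ y ∈ convexHull ℝ (bary '' (T : Set (Finset V))) := by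
  simp only [orderComplexReal, mem_iUnion, exists_prop]

end Barycenter

section Realization

variable {V : Type*} [Fintype V]

theorem supp_nonempty_of_mem_stdSimplex {x : V → ℝ} (hx : x ∈ stdSimplex ℝ V) :
    (supp x).Nonempty := by
  obtain ⟨v, -, hv⟩ := Finset.exists_ne_zero_of_sum_ne_zero (hx.2.trans_ne one_ne_zero)
  exact ⟨v, mem_supp.2 hv⟩

theorem mem_KReal_iff {L : Set (Finset V)} {x : V → ℝ} :
    x ∈ KReal L ↔ x ∈ stdSimplex ℝ V ∧ supp x ∈ L := by
  have exists_eq_supp_iff : (∃ a ∈ L, ∀ v, x v ≠ 0 ↔ v ∈ a) ↔ supp x ∈ L := by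
    simp only [← mem_supp, ← Finset.ext_iff, exists_eq_right']
  rw [← exists_eq_supp_iff]
  exact and_assoc.symm

theorem KReal_diff (K H : Set (Finset V)) : KReal K \ KReal H = KReal (K \ H) := by
  ext x
  simp only [mem_sdiff, mem_KReal_iff]
  tauto

theorem convex_stdSimplex_inter_supp_eq (a : Finset V) :
    Convex ℝ {x ∈ stdSimplex ℝ V | supp x = a} := by
  rintro x ⟨hx, rfl⟩ y ⟨hy, hxy⟩ c d hc hd hcd
  refine ⟨convex_stdSimplex ℝ V hx hy hc hd hcd, ?_⟩
  ext v
  have hv : v ∈ supp y ↔ v ∈ supp x := by rw [hxy]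
  by_cases hvx : x v = 0
  · have hvy : y v = 0 := by simpa [hvx] using hv
    simp [hvx, hvy]
  · have hvy : y v ≠ 0 := by simpa [hvx] using hv
    have hpos : 0 < c • x v + d • y v :=
      convex_Ioi (0 : ℝ) ((hx.1 v).lt_of_ne' hvx) ((hy.1 v).lt_of_ne' hvy) hc hd hcd
    simpa [hvx] using hpos.ne'

variable [DecidableEq V]

theorem MReal_eq_orderComplexReal (K H : Set (Finset V)) :
    MReal K H = orderComplexReal (K \ H) := rfl

theorem mem_of_mem_orderComplexReal {L : Set (Finset V)} {y : V → ℝ} (hy : y ∈ orderComplexReal L)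
    {a : Finset V} (ha : a.Nonempty) (hsupp : a ⊆ supp y)
    (hupper : ∀ v ∈ a, ∀ u, y v ≤ y u → u ∈ a) : a ∈ L := by
  obtain ⟨T, hTL, hT, hyT⟩ := mem_orderComplexReal_iff.1 hy
  exact hTL (mem_of_mem_convexHull_bary hT hyT ha hsupp hupper)

theorem superlevel_mem_of_mem_orderComplexReal {L : Set (Finset V)} {y : V → ℝ}
    (hy : y ∈ orderComplexReal L) {s : ℝ} (hs : 0 < s) (hne : (superlevel y s).Nonempty) :
    superlevel y s ∈ L :=
  mem_of_mem_orderComplexReal hy hne (superlevel_subset_supp y hs) fun _ hv _ huv ↦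
    mem_superlevel.2 ((mem_superlevel.1 hv).trans huv)

theorem orderComplexReal_subset_KReal {L : Set (Finset V)} (hL : ∀ a ∈ L, a.Nonempty) :
    orderComplexReal L ⊆ KReal L := by
  intro y hy
  have mem_stdSimplex : y ∈ stdSimplex ℝ V := by
    obtain ⟨T, hTL, -, hyT⟩ := mem_orderComplexReal_iff.1 hy
    refine convexHull_min ?_ (convex_stdSimplex ℝ V) hyT
    rintro _ ⟨b, hb, rfl⟩
    exact bary_mem_stdSimplex (hL b (hTL hb))
  have supp_isUpper : ∀ v ∈ supp y, ∀ u, y v ≤ y u → u ∈ supp y := fun v hv u huv ↦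
    mem_supp.2 (((mem_stdSimplex.1 v).lt_of_ne' (mem_supp.1 hv)).trans_le huv).ne'
  exact mem_KReal_iff.2 ⟨mem_stdSimplex, mem_of_mem_orderComplexReal hy
    (supp_nonempty_of_mem_stdSimplex mem_stdSimplex) subset_rfl supp_isUpper⟩

end Realization

section Retraction

variable {V : Type*} [Fintype V]

/-- The coefficient of `bary a` in the expansion of a point `x` of the standard simplex with respect
to the barycentric subdivision. -/
noncomputable def baryCoord (x : V → ℝ) (a : Finset V) : ℝ := a.card * levelLength x a

theorem baryCoord_nonneg (x : V → ℝ) (a : Finset V) : 0 ≤ baryCoord x a :=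
  mul_nonneg a.card.cast_nonneg (levelLength_nonneg x a)

theorem indicator_baryCoord_nonneg (L : Set (Finset V)) (x : V → ℝ) (a : Finset V) :
    0 ≤ L.indicator (baryCoord x) a :=
  indicator_nonneg (fun b _ ↦ baryCoord_nonneg x b) a

theorem exists_superlevel_eq_of_baryCoord_ne_zero {x : V → ℝ} {a : Finset V}
    (h : baryCoord x a ≠ 0) : ∃ s, 0 < s ∧ superlevel x s = a :=
  exists_superlevel_eq_of_levelLength_ne_zero (right_ne_zero_of_mul h)

theorem isChain_baryCoord_ne_zero (x : V → ℝ) : IsChain (· ⊆ ·) {a | baryCoord x a ≠ 0} := by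
  intro a ha b hb _
  obtain ⟨s, -, rfl⟩ := exists_superlevel_eq_of_baryCoord_ne_zero ha
  obtain ⟨t, -, rfl⟩ := exists_superlevel_eq_of_baryCoord_ne_zero hb
  exact (le_total t s).imp (antitone_superlevel x ·) (antitone_superlevel x ·)

theorem baryCoord_supp_pos {x : V → ℝ} (hx : x ∈ stdSimplex ℝ V) : 0 < baryCoord x (supp x) :=
  mul_pos (mod_cast (supp_nonempty_of_mem_stdSimplex hx).card_pos) (levelLength_supp_pos hx.1)

theorem continuous_baryCoord (a : Finset V) : Continuous fun x : V → ℝ ↦ baryCoord x a :=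
  continuous_const.mul (continuous_levelLength a)

theorem sum_indicator_baryCoord_pos {L : Set (Finset V)} {x : V → ℝ} (hx : x ∈ KReal L) :
    0 < ∑ a, L.indicator (baryCoord x) a := by
  obtain ⟨hx, hsupp⟩ := mem_KReal_iff.1 hx
  refine Finset.sum_pos' (fun a _ ↦ indicator_baryCoord_nonneg L x a)
    ⟨supp x, Finset.mem_univ _, ?_⟩
  rw [indicator_of_mem hsupp]
  exact baryCoord_supp_pos hx

theorem sum_baryCoord {x : V → ℝ} (hx : ∀ v, x v ∈ Icc (0 : ℝ) 1) :
    ∑ a, baryCoord x a = ∑ v, x v := by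
  classical
  calc ∑ a, baryCoord x a
      = ∑ a, ∑ _v ∈ a, levelLength x a := by simp only [baryCoord, Finset.sum_const, nsmul_eq_mul]
    _ = ∑ v, ∑ a with v ∈ a, levelLength x a := Finset.sum_comm' (by simp)
    _ = ∑ v, x v := Finset.sum_congr rfl fun v _ ↦ sum_levelLength_filter_mem x (hx v)

variable [DecidableEq V]

theorem sum_baryCoord_smul_bary {x : V → ℝ} (hx : ∀ v, x v ∈ Icc (0 : ℝ) 1) :
    ∑ a, baryCoord x a • bary a = x := by
  ext v
  calc (∑ a, baryCoord x a • bary a) v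
      = ∑ a, levelLength x a * (a.card * bary a v) := by
        simp only [Finset.sum_apply, Pi.smul_apply, smul_eq_mul, baryCoord]
        exact Finset.sum_congr rfl fun a _ ↦ by ring
    _ = ∑ a with v ∈ a, levelLength x a := by
        simp only [card_mul_bary, mul_ite, mul_one, mul_zero, Finset.sum_filter]
    _ = x v := sum_levelLength_filter_mem x (hx v)

/-- The retraction of `KReal L` onto `orderComplexReal L`: drop the barycentric coordinates of `x`
at simplices outside `L` and renormalize. -/
noncomputable def dropRetraction (L : Set (Finset V)) (x : V → ℝ) : V → ℝ :=
  Finset.univ.centerMass (L.indicator (baryCoord x)) bary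

theorem continuousOn_dropRetraction (L : Set (Finset V)) :
    ContinuousOn (dropRetraction L) (KReal L) := by
  have continuous_indicator (a : Finset V) :
      Continuous fun x : V → ℝ ↦ L.indicator (baryCoord x) a := by
    by_cases ha : a ∈ L
    · simpa only [indicator_of_mem ha] using continuous_baryCoord a
    · simpa only [indicator_of_notMem ha] using continuous_const
  unfold dropRetraction Finset.centerMass
  exact ((continuous_finsetSum _ fun a _ ↦ continuous_indicator a).continuousOn.inv₀
      fun x hx ↦ (sum_indicator_baryCoord_pos hx).ne').smul
    (continuous_finsetSum _ fun a _ ↦ (continuous_indicator a).smul continuous_const).continuousOn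

theorem dropRetraction_mem_orderComplexReal {L : Set (Finset V)} {x : V → ℝ} (hx : x ∈ KReal L) :
    dropRetraction L x ∈ orderComplexReal L := by
  let T : Finset (Finset V) := {a | L.indicator (baryCoord x) a ≠ 0}
  have mem_T {a : Finset V} (ha : a ∈ (T : Set (Finset V))) : a ∈ L ∧ baryCoord x a ≠ 0 := by
    simpa [T] using ha
  refine mem_orderComplexReal_iff.2 ⟨T, fun a ha ↦ (mem_T ha).1,
    (isChain_baryCoord_ne_zero x).mono fun a ha ↦ (mem_T ha).2, ?_⟩
  rw [dropRetraction, ← Finset.centerMass_filter_ne_zero]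
  refine Finset.centerMass_mem_convexHull T (fun a _ ↦ indicator_baryCoord_nonneg L x a) ?_
    fun a ha ↦ mem_image_of_mem bary ha
  rw [Finset.sum_filter_ne_zero]
  exact sum_indicator_baryCoord_pos hx

theorem dropRetraction_eq_self {L : Set (Finset V)} (hL : ∀ a ∈ L, a.Nonempty) {y : V → ℝ}
    (hy : y ∈ orderComplexReal L) : dropRetraction L y = y := by
  have hsimplex : y ∈ stdSimplex ℝ V := (mem_KReal_iff.1 (orderComplexReal_subset_KReal hL hy)).1
  have hIcc : ∀ v, y v ∈ Icc (0 : ℝ) 1 := mem_Icc_of_mem_stdSimplex hsimplex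
  have support_subset : Function.support (baryCoord y) ⊆ L := by
    intro a ha
    rw [Function.mem_support] at ha
    have hne : a.Nonempty := Finset.card_ne_zero.1 (Nat.cast_ne_zero.1 (left_ne_zero_of_mul ha))
    obtain ⟨s, hs, rfl⟩ := exists_superlevel_eq_of_baryCoord_ne_zero ha
    exact superlevel_mem_of_mem_orderComplexReal hy hs hne
  rw [dropRetraction, indicator_eq_self.2 support_subset,
    Finset.centerMass_eq_of_sum_1 _ _ ((sum_baryCoord hIcc).trans hsimplex.2),
    sum_baryCoord_smul_bary hIcc]

theorem mem_supp_dropRetraction_iff {L : Set (Finset V)} {x : V → ℝ} (hx : x ∈ KReal L) {v : V} :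
    v ∈ supp (dropRetraction L x) ↔ ∃ a ∈ L, baryCoord x a ≠ 0 ∧ v ∈ a := by
  have hnonneg : ∀ a ∈ Finset.univ, 0 ≤ L.indicator (baryCoord x) a * bary a v := fun a _ ↦
    mul_nonneg (indicator_baryCoord_nonneg L x a) (bary_nonneg a v)
  simp [dropRetraction, Finset.centerMass, (sum_indicator_baryCoord_pos hx).ne',
    Finset.sum_eq_zero_iff_of_nonneg hnonneg, bary_eq_zero_iff, and_assoc]

theorem supp_dropRetraction {L : Set (Finset V)} {x : V → ℝ} (hx : x ∈ KReal L) :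
    supp (dropRetraction L x) = supp x := by
  ext v
  rw [mem_supp_dropRetraction_iff hx]
  constructor
  · rintro ⟨a, -, ha, hva⟩
    obtain ⟨s, hs, rfl⟩ := exists_superlevel_eq_of_baryCoord_ne_zero ha
    exact superlevel_subset_supp x hs hva
  · obtain ⟨hsimplex, hsupp⟩ := mem_KReal_iff.1 hx
    exact fun hv ↦ ⟨supp x, hsupp, (baryCoord_supp_pos hsimplex).ne', hv⟩

theorem segment_dropRetraction_subset {L : Set (Finset V)} (hL : ∀ a ∈ L, a.Nonempty) {x : V → ℝ}
    (hx : x ∈ KReal L) : segment ℝ x (dropRetraction L x) ⊆ KReal L := by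
  have hr := orderComplexReal_subset_KReal hL (dropRetraction_mem_orderComplexReal hx)
  obtain ⟨hsimplex, hsupp⟩ := mem_KReal_iff.1 hx
  refine ((convex_stdSimplex_inter_supp_eq (supp x)).segment_subset ⟨hsimplex, rfl⟩
    ⟨(mem_KReal_iff.1 hr).1, supp_dropRetraction hx⟩).trans ?_
  rintro z ⟨hz, hzx⟩
  exact mem_KReal_iff.2 ⟨hz, hzx ▸ hsupp⟩

theorem isStrongDeformationRetraction_dropRetraction {L : Set (Finset V)}
    (hL : ∀ a ∈ L, a.Nonempty) :
    IsStrongDeformationRetraction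
      (fun p : (V → ℝ) × ℝ ↦ AffineMap.lineMap p.1 (dropRetraction L p.1) p.2)
      (KReal L) (orderComplexReal L) :=
  isStrongDeformationRetraction_lineMap (orderComplexReal_subset_KReal hL)
    (continuousOn_dropRetraction L) (fun _ hx ↦ dropRetraction_mem_orderComplexReal hx)
    (fun _ hy ↦ dropRetraction_eq_self hL hy) fun _ hx ↦ segment_dropRetraction_subset hL hx

end Retraction

theorem strong_deformation_retraction_onto_M_general
    (V : Type*) [Fintype V] [DecidableEq V] (K H : Set (Finset V))
    (hne : ∀ a ∈ K \ H, a.Nonempty) :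
    ∃ F : (V → ℝ) × ℝ → (V → ℝ),
      ContinuousOn F ((KReal K \ KReal H) ×ˢ Set.Icc (0 : ℝ) 1) ∧
      (∀ x ∈ KReal K \ KReal H, ∀ t ∈ Set.Icc (0 : ℝ) 1, F (x, t) ∈ KReal K \ KReal H) ∧
      (∀ x ∈ KReal K \ KReal H, F (x, 0) = x) ∧
      (∀ x ∈ KReal K \ KReal H, F (x, 1) ∈ MReal K H) ∧
      (∀ y ∈ MReal K H, ∀ t ∈ Set.Icc (0 : ℝ) 1, F (y, t) = y) ∧
      Nonempty (ContinuousMap.HomotopyEquiv ↥(KReal K \ KReal H) ↥(MReal K H)) := by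
  rw [KReal_diff, MReal_eq_orderComplexReal]
  have hF := isStrongDeformationRetraction_dropRetraction hne
  exact ⟨_, hF.continuousOn, hF.mem, hF.apply_zero, hF.apply_one_mem, hF.apply_of_mem,
    hF.nonempty_homotopyEquiv⟩

/-- Lemma 5.4: there is a strong deformation retraction of `|K| ∖ |H|` onto `|M|`;
in particular `|K| ∖ |H|` is homotopy equivalent to `|M|`. -/
theorem strong_deformation_retraction_onto_M
    (V : Type*) [Fintype V] [DecidableEq V] (K H : Set (Finset V))
    (hKne : ∀ a ∈ K, a.Nonempty)
    (hKdown : ∀ a ∈ K, ∀ b ⊆ a, b.Nonempty → b ∈ K)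
    (hHK : H ⊆ K)
    (hHdown : ∀ a ∈ H, ∀ b ⊆ a, b.Nonempty → b ∈ H) :
    ∃ F : (V → ℝ) × ℝ → (V → ℝ),
      ContinuousOn F ((KReal K \ KReal H) ×ˢ Set.Icc (0 : ℝ) 1) ∧
      (∀ x ∈ KReal K \ KReal H, ∀ t ∈ Set.Icc (0 : ℝ) 1, F (x, t) ∈ KReal K \ KReal H) ∧
      (∀ x ∈ KReal K \ KReal H, F (x, 0) = x) ∧
      (∀ x ∈ KReal K \ KReal H, F (x, 1) ∈ MReal K H) ∧
      (∀ y ∈ MReal K H, ∀ t ∈ Set.Icc (0 : ℝ) 1, F (y, t) = y) ∧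
      Nonempty (ContinuousMap.HomotopyEquiv ↥(KReal K \ KReal H) ↥(MReal K H)) :=
  strong_deformation_retraction_onto_M_general V K H fun a ha ↦ hKne a ha.1
end

section
/- For every integer m ≥ 1 and every integer k > m, the singular homology with rational coefficients H_k(X_m; ℚ) vanishes. (This is the genus-zero case of Harer's vanishing theorem, Theorem 5.1 of the paper: H_k(M_{0,n}; ℚ) = 0 for k > n − 3, stated via the explicit model X_{n−3} of M_{0,n}; the paper proves it by observing that X_m is an affine variety of dimension m.) -/
open CategoryTheory

/-- The hyperplane-complement model `X_m` of the moduli space `M_{0,m+3}`: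
tuples `(z_1, …, z_m)` of complex numbers with `z_a ≠ 0`, `z_a ≠ 1`, and
`z_a ≠ z_b` for `a ≠ b`. -/
def modelX (m : ℕ) : Set (Fin m → ℂ) :=
  {z | (∀ a, z a ≠ 0) ∧ (∀ a, z a ≠ 1) ∧ ∀ a b, a ≠ b → z a ≠ z b}

/-- The singular chain complex of a topological space with rational coefficients:
the alternating face map complex of the levelwise free ℚ-module on the singular
simplicial set. -/
noncomputable def singularChainComplexQ (X : TopCat.{0}) : ChainComplex (ModuleCat.{0} ℚ) ℕ :=
  (AlgebraicTopology.alternatingFaceMapComplex (ModuleCat.{0} ℚ)).obj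
    (((SimplicialObject.whiskering (Type 0) (ModuleCat.{0} ℚ)).obj
      (ModuleCat.free ℚ)).obj (TopCat.toSSet.obj X))

/-- Singular homology with rational coefficients. -/
noncomputable def singularHomologyQ (X : TopCat.{0}) (k : ℕ) : ModuleCat.{0} ℚ :=
  (singularChainComplexQ X).homology k

/-!
Forgetting a point presents `X_{m+1}` as the complement in `X_m × ℂ` of finitely many pairwise
disjoint sections. Removing them raises the degree above which homology vanishes by at most
one: by Mayer–Vietoris for the complement and a tube around each section, it suffices to control the
punctured tube, which is covered by two slit tubes meeting in two half-tubes, and each of these four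
pieces deforms onto the base by a straight-line homotopy in the fibres.

Mayer–Vietoris rests on barycentric subdivision. Its chain homotopies are constructed once and for
all on formal chains of tuples of points, by coning off at barycentres, and are transported to
singular chains by pushing forward along each singular simplex. Chain complexes are augmented, so
that the cone identities and the vanishing statements take one form in every degree.
-/

section FreeModule

variable {R α M : Type*} [Ring R] [AddCommGroup M] [Module R M]

theorem linearMap_apply_eq_of_single {f g : (α →₀ R) →ₗ[R] M}
    (h : ∀ a, f (Finsupp.single a 1) = g (Finsupp.single a 1)) (c : α →₀ R) : f c = g c :=
  DFunLike.congr_fun (Finsupp.lhom_ext' fun a => LinearMap.ext_ring (h a)) c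

theorem linearMap_apply_mem_of_mem_supported {f : (α →₀ R) →ₗ[R] M} {s : Set α}
    {P : Submodule R M} (h : ∀ a ∈ s, f (Finsupp.single a 1) ∈ P) {c : α →₀ R}
    (hc : c ∈ Finsupp.supported R R s) : f c ∈ P := by
  rw [Finsupp.supported_eq_span_single] at hc
  exact Submodule.span_le.2 (Set.image_subset_iff.2 h : _ ⊆ (P.comap f : Set (α →₀ R))) hc

end FreeModule

section AlternatingBoundary

variable {R α β α' β' : Type*} [Ring R] {n : ℕ}

/-- The alternating sum `∑ (-1)ⁱ dᵢ` of face operators `dᵢ`, extended linearly to the free modules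
on the simplices. It is used both for tuples of vertices and for singular simplices. -/
noncomputable def alternatingBoundary (R : Type*) [Ring R] (d : Fin n → α → β) :
    (α →₀ R) →ₗ[R] (β →₀ R) :=
  ∑ i : Fin n, (-1 : ℤ) ^ (i : ℕ) • Finsupp.lmapDomain R R (d i)

theorem alternatingBoundary_single (d : Fin n → α → β) (a : α) (r : R) :
    alternatingBoundary R d (Finsupp.single a r) =
      ∑ i : Fin n, (-1 : ℤ) ^ (i : ℕ) • Finsupp.single (d i a) r := by
  simp [alternatingBoundary, LinearMap.sum_apply]

theorem alternatingBoundary_lmapDomain {d : Fin n → α → β} {d' : Fin n → α' → β'}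
    {f : α → α'} {g : β → β'} (h : ∀ i a, d' i (f a) = g (d i a)) (c : α →₀ R) :
    alternatingBoundary R d' (Finsupp.lmapDomain R R f c) =
      Finsupp.lmapDomain R R g (alternatingBoundary R d c) :=
  linearMap_apply_eq_of_single (f := alternatingBoundary R d' ∘ₗ Finsupp.lmapDomain R R f)
    (g := Finsupp.lmapDomain R R g ∘ₗ alternatingBoundary R d)
    (fun a => by simp [alternatingBoundary_single, h, map_sum]) c

theorem alternatingBoundary_mem_supported {d : Fin n → α → β} {s : Set α} {t : Set β}
    (h : ∀ i, ∀ a ∈ s, d i a ∈ t) {c : α →₀ R} (hc : c ∈ Finsupp.supported R R s) :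
    alternatingBoundary R d c ∈ Finsupp.supported R R t := by
  refine linearMap_apply_mem_of_mem_supported (fun a ha => ?_) hc
  rw [alternatingBoundary_single]
  exact Submodule.sum_mem _ fun i _ =>
    zsmul_mem (Finsupp.single_mem_supported R 1 (h i a ha)) _

end AlternatingBoundary

/-! ### Chains of vertex tuples -/

/-- The free module on `n`-tuples of points of `V`, thought of as simplices given by their ordered
vertices. The index counts vertices, so degree `0` is the augmentation. -/
abbrev TupleChain (R V : Type*) [Ring R] (n : ℕ) : Type _ := (Fin n → V) →₀ R

namespace TupleChain

variable {R V W : Type*} [Ring R] {n : ℕ}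

/-- The boundary of a tuple is the alternating sum of the tuples with one entry omitted. -/
noncomputable def boundary : TupleChain R V (n + 1) →ₗ[R] TupleChain R V n :=
  alternatingBoundary R fun i v => v ∘ i.succAbove

/-- The cone operator with apex `b`, which puts `b` in front of every tuple. -/
noncomputable def cone (b : V) : TupleChain R V n →ₗ[R] TupleChain R V (n + 1) :=
  Finsupp.lmapDomain R R fun v => (Fin.cons b v : Fin (n + 1) → V)

/-- The map of tuple chains induced by a map of vertices. -/
noncomputable def map (f : V → W) : TupleChain R V n →ₗ[R] TupleChain R W n :=
  Finsupp.lmapDomain R R (f ∘ ·)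

theorem cone_single (b : V) (v : Fin n → V) (r : R) :
    cone b (Finsupp.single v r) = Finsupp.single (Fin.cons b v : Fin (n + 1) → V) r := by
  simp [cone]

theorem map_single (f : V → W) (v : Fin n → V) (r : R) :
    map f (Finsupp.single v r) = Finsupp.single (f ∘ v) r := by
  simp [map]

theorem boundary_cone_zero (b : V) (c : TupleChain R V 0) : boundary (cone b c) = c :=
  linearMap_apply_eq_of_single (f := boundary ∘ₗ cone b) (g := LinearMap.id)
    (fun v => by simp [boundary, cone_single, alternatingBoundary_single, Subsingleton.elim _ v]) c

theorem boundary_cone (b : V) (c : TupleChain R V (n + 1)) :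
    boundary (cone b c) = c - cone b (boundary c) := by
  refine linearMap_apply_eq_of_single (f := boundary ∘ₗ cone b)
    (g := LinearMap.id - cone b ∘ₗ boundary) (fun v => ?_) c
  simp only [LinearMap.comp_apply, LinearMap.sub_apply, LinearMap.id_apply, boundary, cone_single,
    alternatingBoundary_single, Fin.sum_univ_succ (n := n + 1), map_sum, map_zsmul, Fin.val_zero,
    Fin.val_succ, pow_zero, one_smul, pow_succ, mul_neg_one, neg_smul, Finset.sum_neg_distrib,
    Fin.succAbove_zero, Fin.cons_comp_succ, Fin.cons_comp_succ_succAbove, ← sub_eq_add_neg]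
  rfl

theorem boundary_boundary (c : TupleChain R V (n + 2)) : boundary (boundary c) = 0 := by
  induction n with
  | zero =>
    refine linearMap_apply_eq_of_single (f := boundary ∘ₗ boundary) (g := 0) (fun v => ?_) c
    rw [LinearMap.comp_apply, ← Fin.cons_self_tail v, ← cone_single, boundary_cone, map_sub,
      boundary_cone_zero, sub_self, LinearMap.zero_apply]
  | succ n ih =>
    refine linearMap_apply_eq_of_single (f := boundary ∘ₗ boundary) (g := 0) (fun v => ?_) c
    rw [LinearMap.comp_apply, ← Fin.cons_self_tail v, ← cone_single, boundary_cone, map_sub,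
      boundary_cone, ih, map_zero, sub_zero, sub_self, LinearMap.zero_apply]

theorem map_boundary (f : V → W) (c : TupleChain R V (n + 1)) :
    map f (boundary c) = boundary (map f c) :=
  (alternatingBoundary_lmapDomain (f := (f ∘ ·)) (g := (f ∘ ·)) (fun _ _ => rfl) c).symm

theorem map_cone (f : V → W) (b : V) (c : TupleChain R V n) :
    map f (cone b c) = cone (f b) (map f c) :=
  linearMap_apply_eq_of_single (f := map f ∘ₗ cone b) (g := cone (f b) ∘ₗ map f)
    (fun v => by simp only [LinearMap.comp_apply, cone_single, map_single, Fin.comp_cons]) c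

/-- Barycentric subdivision with respect to an arbitrary choice `b` of a barycentre for every
nonempty tuple: the cone from `b v` over the subdivided boundary of `v`. -/
noncomputable def subdivide (b : ∀ n, (Fin (n + 1) → V) → V) :
    ∀ {n}, TupleChain R V n →ₗ[R] TupleChain R V n
  | 0 => LinearMap.id
  | n + 1 => Finsupp.linearCombination R fun v =>
      cone (b n v) (subdivide b (boundary (Finsupp.single v 1)))

/-- The chain homotopy between the identity and `TupleChain.subdivide b`. -/
noncomputable def subdivideHomotopy (b : ∀ n, (Fin (n + 1) → V) → V) :
    ∀ {n}, TupleChain R V n →ₗ[R] TupleChain R V (n + 1)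
  | 0 => 0
  | n + 1 => Finsupp.linearCombination R fun v =>
      cone (b n v) (Finsupp.single v 1 - subdivideHomotopy b (boundary (Finsupp.single v 1)))

variable (b : ∀ n, (Fin (n + 1) → V) → V)

theorem subdivide_single (v : Fin (n + 1) → V) :
    subdivide b (Finsupp.single v (1 : R)) =
      cone (b n v) (subdivide b (boundary (Finsupp.single v 1))) := by
  simp [subdivide]

theorem subdivideHomotopy_single (v : Fin (n + 1) → V) :
    subdivideHomotopy b (Finsupp.single v (1 : R)) =
      cone (b n v)
        (Finsupp.single v 1 - subdivideHomotopy b (boundary (Finsupp.single v 1))) := by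
  simp [subdivideHomotopy]

theorem boundary_subdivide (c : TupleChain R V (n + 1)) :
    boundary (subdivide b c) = subdivide b (boundary c) := by
  induction n with
  | zero =>
    refine linearMap_apply_eq_of_single (f := boundary ∘ₗ subdivide b)
      (g := subdivide b ∘ₗ boundary) (fun v => ?_) c
    rw [LinearMap.comp_apply, LinearMap.comp_apply, subdivide_single, boundary_cone_zero]
  | succ n ih =>
    refine linearMap_apply_eq_of_single (f := boundary ∘ₗ subdivide b)
      (g := subdivide b ∘ₗ boundary) (fun v => ?_) c
    rw [LinearMap.comp_apply, LinearMap.comp_apply, subdivide_single, boundary_cone, ih,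
      boundary_boundary, map_zero, map_zero, sub_zero]

theorem boundary_subdivideHomotopy_zero (c : TupleChain R V 0) :
    boundary (subdivideHomotopy b c) = c - subdivide b c := by
  simp [subdivideHomotopy, subdivide]

theorem boundary_subdivideHomotopy_add (c : TupleChain R V (n + 1)) :
    boundary (subdivideHomotopy b c) + subdivideHomotopy b (boundary c) = c - subdivide b c := by
  induction n with
  | zero =>
    refine linearMap_apply_eq_of_single
      (f := boundary ∘ₗ subdivideHomotopy b + subdivideHomotopy b ∘ₗ boundary)
      (g := LinearMap.id - subdivide b) (fun v => ?_) c
    simp only [LinearMap.comp_apply, LinearMap.add_apply, LinearMap.sub_apply, LinearMap.id_apply,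
      subdivideHomotopy_single, subdivide_single, boundary_cone, map_sub,
      boundary_subdivideHomotopy_zero]
    abel
  | succ n ih =>
    refine linearMap_apply_eq_of_single
      (f := boundary ∘ₗ subdivideHomotopy b + subdivideHomotopy b ∘ₗ boundary)
      (g := LinearMap.id - subdivide b) (fun v => ?_) c
    have homotopy_boundary := ih (boundary (Finsupp.single v 1))
    rw [boundary_boundary, map_zero, add_zero] at homotopy_boundary
    simp only [LinearMap.comp_apply, LinearMap.add_apply, LinearMap.sub_apply, LinearMap.id_apply,
      subdivideHomotopy_single, subdivide_single, boundary_cone, map_sub, homotopy_boundary]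
    abel

theorem map_subdivide {b : ∀ n, (Fin (n + 1) → V) → V} {b' : ∀ n, (Fin (n + 1) → W) → W}
    {f : V → W} (hf : ∀ n v, f (b n v) = b' n (f ∘ v)) (c : TupleChain R V n) :
    map f (subdivide b c) = subdivide b' (map f c) := by
  induction n with
  | zero => rfl
  | succ n ih =>
    refine linearMap_apply_eq_of_single (f := map f ∘ₗ subdivide b)
      (g := subdivide b' ∘ₗ map f) (fun v => ?_) c
    simp only [LinearMap.comp_apply, map_single, subdivide_single, map_cone, ih, map_boundary, hf]

theorem map_subdivideHomotopy {b : ∀ n, (Fin (n + 1) → V) → V}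
    {b' : ∀ n, (Fin (n + 1) → W) → W} {f : V → W} (hf : ∀ n v, f (b n v) = b' n (f ∘ v))
    (c : TupleChain R V n) :
    map f (subdivideHomotopy b c) = subdivideHomotopy b' (map f c) := by
  induction n with
  | zero => simp [subdivideHomotopy]
  | succ n ih =>
    refine linearMap_apply_eq_of_single (f := map f ∘ₗ subdivideHomotopy b)
      (g := subdivideHomotopy b' ∘ₗ map f) (fun v => ?_) c
    simp only [LinearMap.comp_apply, map_single, subdivideHomotopy_single, map_cone, map_sub, ih,
      map_boundary, hf]

theorem subdivide_single_mem_supported {P : ∀ n, (Fin n → V) → Set (Fin n → V)}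
    (zero : ∀ v, v ∈ P 0 v)
    (succ : ∀ n (v : Fin (n + 1) → V) i, ∀ w ∈ P n (v ∘ Fin.succAbove i),
      Fin.cons (b n v) w ∈ P (n + 1) v)
    (v : Fin n → V) : subdivide b (Finsupp.single v (1 : R)) ∈ Finsupp.supported R R (P n v) := by
  induction n with
  | zero => exact Finsupp.single_mem_supported R 1 (zero v)
  | succ n ih =>
    have boundary_mem : boundary (Finsupp.single v (1 : R)) ∈
        Finsupp.supported R R (Set.range fun i : Fin (n + 1) => v ∘ i.succAbove) :=
      alternatingBoundary_mem_supported (s := {v}) (by rintro i _ rfl; exact ⟨i, rfl⟩)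
        (Finsupp.single_mem_supported R 1 rfl)
    rw [subdivide_single]
    refine linearMap_apply_mem_of_mem_supported (f := cone (b n v) ∘ₗ subdivide b) ?_ boundary_mem
    rintro _ ⟨i, rfl⟩
    refine linearMap_apply_mem_of_mem_supported (f := cone (b n v)) (fun w hw => ?_)
      (ih (v ∘ i.succAbove))
    rw [cone_single]
    exact Finsupp.single_mem_supported R 1 (succ n v i w hw)

end TupleChain

/-! ### Affine simplices and their barycentres -/

section AffineSimplex

variable {ι κ μ : Type*} [Fintype ι] [Fintype κ] [Fintype μ]

/-- The affine map from the standard simplex with vertex set `ι` which sends the vertex `i` to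
`v i`. -/
noncomputable def affineSimplex (v : ι → stdSimplex ℝ κ) :
    C(stdSimplex ℝ ι, stdSimplex ℝ κ) where
  toFun t := ⟨∑ i, t i • (v i).1, (convex_stdSimplex ℝ κ).sum_mem (fun i _ => t.2.1 i) t.2.2
    fun i _ => (v i).2⟩
  continuous_toFun := .subtype_mk (continuous_finsetSum _ fun i _ =>
    ((continuous_apply i).comp continuous_subtype_val).smul continuous_const) _

theorem coe_affineSimplex_apply (v : ι → stdSimplex ℝ κ) (t : stdSimplex ℝ ι) :
    (affineSimplex v t).1 = ∑ i, t i • (v i).1 :=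
  rfl

theorem affineSimplex_vertex [DecidableEq ι] :
    affineSimplex (stdSimplex.vertex (S := ℝ)) = ContinuousMap.id (stdSimplex ℝ ι) := by
  ext1 t
  refine Subtype.ext (funext fun j => ?_)
  simp only [coe_affineSimplex_apply, Finset.sum_apply, Pi.smul_apply, Pi.single_apply,
    smul_eq_mul, mul_ite, mul_one, mul_zero, Finset.sum_ite_eq, Finset.mem_univ, if_true]
  rfl

theorem affineSimplex_comp_vertex [DecidableEq ι] (v : ι → stdSimplex ℝ κ) :
    affineSimplex v ∘ stdSimplex.vertex = v :=
  funext fun i => Subtype.ext <| by simp [coe_affineSimplex_apply, Pi.single_apply]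

theorem affineSimplex_comp (v : ι → stdSimplex ℝ κ) (w : κ → stdSimplex ℝ μ) :
    (affineSimplex w).comp (affineSimplex v) = affineSimplex (affineSimplex w ∘ v) := by
  ext1 t
  refine Subtype.ext ?_
  have coe_apply (k : κ) : affineSimplex v t k = ∑ i, t i * v i k :=
    (Finset.sum_apply k _ _).trans rfl
  simp only [ContinuousMap.comp_apply, Function.comp_apply, coe_affineSimplex_apply, coe_apply,
    Finset.sum_smul, Finset.smul_sum, mul_smul]
  exact Finset.sum_comm

theorem affineSimplex_map (v : κ → stdSimplex ℝ μ) (f : ι → κ) (t : stdSimplex ℝ ι) :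
    affineSimplex v (stdSimplex.map f t) = affineSimplex (v ∘ f) t := by
  classical
  refine Subtype.ext ?_
  simp only [coe_affineSimplex_apply, stdSimplex.map_coe, FunOnFinite.linearMap_apply_apply,
    Finset.sum_smul, Function.comp_apply]
  rw [← Finset.sum_fiberwise Finset.univ f]
  exact Finset.sum_congr rfl fun k _ => Finset.sum_congr rfl fun i hi => by
    rw [(Finset.mem_filter.1 hi).2]

theorem dist_affineSimplex_le {v : ι → stdSimplex ℝ κ} {p : stdSimplex ℝ κ} {r : ℝ}
    (h : ∀ i, dist (v i) p ≤ r) (t : stdSimplex ℝ ι) : dist (affineSimplex v t) p ≤ r :=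
  (convex_closedBall p.1 r).sum_mem (fun i _ => t.2.1 i) t.2.2 fun i _ => h i

/-- The barycentre of the vertices of an affine simplex. -/
noncomputable def barycentre (n : ℕ) (v : Fin (n + 1) → stdSimplex ℝ κ) : stdSimplex ℝ κ :=
  affineSimplex v stdSimplex.barycenter

theorem affineSimplex_barycentre (w : κ → stdSimplex ℝ μ) (n : ℕ)
    (v : Fin (n + 1) → stdSimplex ℝ κ) :
    affineSimplex w (barycentre n v) = barycentre n (affineSimplex w ∘ v) :=
  DFunLike.congr_fun (affineSimplex_comp v w) _

theorem coe_barycentre_sub {n : ℕ} (v : Fin (n + 1) → stdSimplex ℝ κ) (j : Fin (n + 1)) :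
    (barycentre n v).1 - (v j).1 =
      ∑ i ∈ Finset.univ.erase j, ((n : ℝ) + 1)⁻¹ • ((v i).1 - (v j).1) := by
  have sum_const : ∑ _i : Fin (n + 1), ((n : ℝ) + 1)⁻¹ • (v j).1 = (v j).1 := by
    rw [Finset.sum_const, Finset.card_univ, Fintype.card_fin, ← Nat.cast_smul_eq_nsmul ℝ, smul_smul,
      Nat.cast_succ, mul_inv_cancel₀ (by positivity), one_smul]
  have barycenter_apply (i : Fin (n + 1)) :
      (stdSimplex.barycenter : stdSimplex ℝ (Fin (n + 1))) i = ((n : ℝ) + 1)⁻¹ :=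
    (stdSimplex.barycenter_apply i).trans (by simp)
  rw [Finset.sum_erase _ (by rw [sub_self, smul_zero])]
  simp only [barycentre, coe_affineSimplex_apply, barycenter_apply, smul_sub,
    Finset.sum_sub_distrib, sum_const]

theorem dist_barycentre_le {n : ℕ} {v : Fin (n + 1) → stdSimplex ℝ κ} {d : ℝ}
    (h : ∀ i j, dist (v i) (v j) ≤ d) (j : Fin (n + 1)) :
    dist (v j) (barycentre n v) ≤ n / (n + 1) * d := by
  rw [dist_comm, Subtype.dist_eq, dist_eq_norm, coe_barycentre_sub]
  calc ‖∑ i ∈ Finset.univ.erase j, ((n : ℝ) + 1)⁻¹ • ((v i).1 - (v j).1)‖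
      ≤ ∑ _i ∈ Finset.univ.erase j, ((n : ℝ) + 1)⁻¹ * d :=
        norm_sum_le_of_le _ fun i _ => by
          rw [norm_smul, Real.norm_of_nonneg (by positivity), ← dist_eq_norm]
          exact mul_le_mul_of_nonneg_left (h i j) (by positivity)
    _ = n / (n + 1) * d := by
        rw [Finset.sum_const, Finset.card_erase_of_mem (Finset.mem_univ j), Finset.card_univ,
          Fintype.card_fin, Nat.add_sub_cancel, nsmul_eq_mul]
        ring

end AffineSimplex

section Mesh

variable {R κ : Type*} [Ring R] [Fintype κ] {n : ℕ}

/-- The factor by which barycentric subdivision shrinks a simplex with `n` vertices. -/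
noncomputable def meshRatio (n : ℕ) : ℝ := (n - 1) / n

theorem meshRatio_succ (n : ℕ) : meshRatio (n + 1) = n / (n + 1) := by
  simp [meshRatio]

theorem meshRatio_le_succ (hn : 0 < n) : meshRatio n ≤ meshRatio (n + 1) := by
  have : (0 : ℝ) < n := Nat.cast_pos.2 hn
  rw [meshRatio_succ, meshRatio, div_le_div_iff₀ this (by positivity)]
  linarith

theorem tendsto_meshRatio_pow (n : ℕ) :
    Filter.Tendsto (fun M : ℕ => meshRatio n ^ M) Filter.atTop (nhds 0) := by
  cases n with
  | zero => simp [meshRatio]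
  | succ n =>
    rw [meshRatio_succ]
    exact tendsto_pow_atTop_nhds_zero_of_lt_one (by positivity)
      ((div_lt_one (by positivity)).2 (lt_add_one _))

theorem dist_cons_barycentre_le {v : Fin (n + 1) → stdSimplex ℝ κ} {w : Fin n → stdSimplex ℝ κ}
    {d : ℝ} (hd : 0 ≤ d) (hvw : ∀ j, dist (w j) (barycentre n v) ≤ meshRatio (n + 1) * d)
    (hw : ∀ i j, dist (w i) (w j) ≤ meshRatio n * d) (i j : Fin (n + 1)) :
    dist ((Fin.cons (barycentre n v) w : Fin (n + 1) → stdSimplex ℝ κ) i)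
      ((Fin.cons (barycentre n v) w : Fin (n + 1) → stdSimplex ℝ κ) j) ≤
        meshRatio (n + 1) * d := by
  cases i using Fin.cases with
  | zero =>
    cases j using Fin.cases with
    | zero => rw [dist_self, meshRatio_succ]; positivity
    | succ j => simpa only [Fin.cons_zero, Fin.cons_succ, dist_comm] using hvw j
  | succ i =>
    cases j using Fin.cases with
    | zero => simpa only [Fin.cons_zero, Fin.cons_succ] using hvw i
    | succ j => exact (hw i j).trans (mul_le_mul_of_nonneg_right (meshRatio_le_succ i.pos) hd)

theorem subdivide_single_mem_supported_mesh (v : Fin n → stdSimplex ℝ κ) :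
    TupleChain.subdivide barycentre (Finsupp.single v (1 : R)) ∈ Finsupp.supported R R {w |
      (∀ p r, (∀ i, dist (v i) p ≤ r) → ∀ j, dist (w j) p ≤ r) ∧
      ∀ d, (∀ i j, dist (v i) (v j) ≤ d) → ∀ i j, dist (w i) (w j) ≤ meshRatio n * d} := by
  refine TupleChain.subdivide_single_mem_supported barycentre (P := fun n v => {w |
    (∀ p r, (∀ i, dist (v i) p ≤ r) → ∀ j, dist (w j) p ≤ r) ∧
    ∀ d, (∀ i j, dist (v i) (v j) ≤ d) → ∀ i j, dist (w i) (w j) ≤ meshRatio n * d})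
    (fun v => ⟨fun _ _ _ j => j.elim0, fun _ _ j => j.elim0⟩) (fun n v k w hw => ⟨?_, ?_⟩) v
  · intro p r hv j
    cases j using Fin.cases with
    | zero => exact dist_affineSimplex_le hv _
    | succ j => exact hw.1 p r (fun i => hv _) j
  · intro d hv
    refine dist_cons_barycentre_le (dist_nonneg.trans (hv 0 0))
      (hw.1 _ _ fun i => ?_) (hw.2 d fun i j => hv _ _)
    rw [meshRatio_succ]
    exact dist_barycentre_le hv _

theorem subdivide_pow_single_mem_supported_mesh {v : Fin n → stdSimplex ℝ κ} {d : ℝ}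
    (hv : ∀ i j, dist (v i) (v j) ≤ d) (M : ℕ) :
    (TupleChain.subdivide barycentre ^ M) (Finsupp.single v (1 : R)) ∈
      Finsupp.supported R R {w | ∀ i j, dist (w i) (w j) ≤ meshRatio n ^ M * d} := by
  induction M with
  | zero =>
    exact Finsupp.single_mem_supported R 1 fun i j => by simpa using hv i j
  | succ M ih =>
    rw [pow_succ' (TupleChain.subdivide _), Module.End.mul_apply]
    refine linearMap_apply_mem_of_mem_supported (fun w hw => ?_) ih
    refine Finsupp.supported_mono ?_ (subdivide_single_mem_supported_mesh w)
    rintro u ⟨-, hu⟩ i j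
    rw [pow_succ', mul_assoc]
    exact hu _ hw i j

end Mesh

/-! ### Singular chains and their subdivision -/

/-- The inclusion of the face of the standard simplex opposite to the vertex `i`. -/
noncomputable def simplexFace {n : ℕ} (i : Fin (n + 1)) :
    C(stdSimplex ℝ (Fin n), stdSimplex ℝ (Fin (n + 1))) :=
  ⟨stdSimplex.map i.succAbove, stdSimplex.continuous_map _⟩

/-- Singular chains of `X` with coefficients in `R`. The index counts vertices: `(n + 1)`-chains
are combinations of singular `n`-simplices, and degree `0` is the augmentation, spanned by the
empty simplex. -/
abbrev SingularChain (R X : Type*) [Ring R] [TopologicalSpace X] (n : ℕ) : Type _ :=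
  C(stdSimplex ℝ (Fin n), X) →₀ R

namespace SingularChain

variable {R X : Type*} [Ring R] [TopologicalSpace X] {κ : Type*} [Fintype κ] {n : ℕ}

/-- The boundary operator of the augmented singular chain complex. -/
noncomputable def boundary : SingularChain R X (n + 1) →ₗ[R] SingularChain R X n :=
  alternatingBoundary R fun i σ => σ.comp (simplexFace i)

/-- The singular chain obtained by reading each tuple as an affine simplex in the domain of `σ` and
composing with `σ`. -/
noncomputable def ofTupleChain (σ : C(stdSimplex ℝ κ, X)) :
    TupleChain R (stdSimplex ℝ κ) n →ₗ[R] SingularChain R X n :=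
  Finsupp.lmapDomain R R fun v => σ.comp (affineSimplex v)

theorem ofTupleChain_single (σ : C(stdSimplex ℝ κ, X)) (v : Fin n → stdSimplex ℝ κ) (r : R) :
    ofTupleChain σ (Finsupp.single v r) = Finsupp.single (σ.comp (affineSimplex v)) r := by
  simp [ofTupleChain]

theorem ofTupleChain_single_vertex (σ : C(stdSimplex ℝ (Fin n), X)) (r : R) :
    ofTupleChain σ (Finsupp.single stdSimplex.vertex r) = Finsupp.single σ r := by
  rw [ofTupleChain_single, affineSimplex_vertex, ContinuousMap.comp_id]

theorem boundary_ofTupleChain (σ : C(stdSimplex ℝ κ, X))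
    (c : TupleChain R (stdSimplex ℝ κ) (n + 1)) :
    boundary (ofTupleChain σ c) = ofTupleChain σ (TupleChain.boundary c) :=
  alternatingBoundary_lmapDomain (f := fun v => σ.comp (affineSimplex v))
    (g := fun v => σ.comp (affineSimplex v))
    (fun i v => ContinuousMap.ext fun t => congrArg σ (affineSimplex_map v i.succAbove t)) c

theorem ofTupleChain_comp_affineSimplex {m : ℕ} (σ : C(stdSimplex ℝ κ, X))
    (w : Fin m → stdSimplex ℝ κ) (c : TupleChain R (stdSimplex ℝ (Fin m)) n) :
    ofTupleChain (σ.comp (affineSimplex w)) c =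
      ofTupleChain σ (TupleChain.map (affineSimplex w) c) :=
  linearMap_apply_eq_of_single (f := ofTupleChain (σ.comp (affineSimplex w)))
    (g := ofTupleChain σ ∘ₗ TupleChain.map (affineSimplex w))
    (fun v => by
      rw [LinearMap.comp_apply, TupleChain.map_single, ofTupleChain_single, ofTupleChain_single,
        ContinuousMap.comp_assoc, affineSimplex_comp]) c

theorem boundary_boundary (c : SingularChain R X (n + 2)) : boundary (boundary c) = 0 := by
  refine linearMap_apply_eq_of_single (f := boundary ∘ₗ boundary) (g := 0) (fun σ => ?_) c
  rw [LinearMap.comp_apply, ← ofTupleChain_single_vertex, boundary_ofTupleChain,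
    boundary_ofTupleChain, TupleChain.boundary_boundary, map_zero, LinearMap.zero_apply]

/-- Barycentric subdivision of singular chains. -/
noncomputable def subdivide : SingularChain R X n →ₗ[R] SingularChain R X n :=
  Finsupp.linearCombination R fun σ =>
    ofTupleChain σ (TupleChain.subdivide barycentre (Finsupp.single stdSimplex.vertex 1))

/-- The chain homotopy between the identity and barycentric subdivision. -/
noncomputable def subdivideHomotopy : SingularChain R X n →ₗ[R] SingularChain R X (n + 1) :=
  Finsupp.linearCombination R fun σ =>
    ofTupleChain σ (TupleChain.subdivideHomotopy barycentre (Finsupp.single stdSimplex.vertex 1))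

theorem subdivide_single (σ : C(stdSimplex ℝ (Fin n), X)) :
    subdivide (Finsupp.single σ (1 : R)) =
      ofTupleChain σ (TupleChain.subdivide barycentre (Finsupp.single stdSimplex.vertex 1)) := by
  simp [subdivide]

theorem subdivideHomotopy_single (σ : C(stdSimplex ℝ (Fin n), X)) :
    subdivideHomotopy (Finsupp.single σ (1 : R)) =
      ofTupleChain σ
        (TupleChain.subdivideHomotopy barycentre (Finsupp.single stdSimplex.vertex 1)) := by
  simp [subdivideHomotopy]

theorem subdivide_ofTupleChain (σ : C(stdSimplex ℝ κ, X)) (c : TupleChain R (stdSimplex ℝ κ) n) :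
    subdivide (ofTupleChain σ c) = ofTupleChain σ (TupleChain.subdivide barycentre c) :=
  linearMap_apply_eq_of_single (f := subdivide ∘ₗ ofTupleChain σ)
    (g := ofTupleChain σ ∘ₗ TupleChain.subdivide barycentre)
    (fun v => by
      rw [LinearMap.comp_apply, LinearMap.comp_apply, ofTupleChain_single, subdivide_single,
        ofTupleChain_comp_affineSimplex, TupleChain.map_subdivide (affineSimplex_barycentre v),
        TupleChain.map_single, affineSimplex_comp_vertex]) c

theorem subdivideHomotopy_ofTupleChain (σ : C(stdSimplex ℝ κ, X))
    (c : TupleChain R (stdSimplex ℝ κ) n) :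
    subdivideHomotopy (ofTupleChain σ c) =
      ofTupleChain σ (TupleChain.subdivideHomotopy barycentre c) :=
  linearMap_apply_eq_of_single (f := subdivideHomotopy ∘ₗ ofTupleChain σ)
    (g := ofTupleChain σ ∘ₗ TupleChain.subdivideHomotopy barycentre)
    (fun v => by
      rw [LinearMap.comp_apply, LinearMap.comp_apply, ofTupleChain_single,
        subdivideHomotopy_single, ofTupleChain_comp_affineSimplex,
        TupleChain.map_subdivideHomotopy (affineSimplex_barycentre v),
        TupleChain.map_single, affineSimplex_comp_vertex]) c

theorem subdivide_pow_ofTupleChain (σ : C(stdSimplex ℝ κ, X))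
    (c : TupleChain R (stdSimplex ℝ κ) n) (M : ℕ) :
    (subdivide ^ M) (ofTupleChain σ c) =
      ofTupleChain σ ((TupleChain.subdivide barycentre ^ M) c) := by
  induction M with
  | zero => rfl
  | succ M ih =>
    rw [pow_succ', pow_succ', Module.End.mul_apply, Module.End.mul_apply, ih,
      subdivide_ofTupleChain]

theorem boundary_subdivide (c : SingularChain R X (n + 1)) :
    boundary (subdivide c) = subdivide (boundary c) := by
  refine linearMap_apply_eq_of_single (f := boundary ∘ₗ subdivide) (g := subdivide ∘ₗ boundary)
    (fun σ => ?_) c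
  rw [LinearMap.comp_apply, LinearMap.comp_apply, ← ofTupleChain_single_vertex,
    subdivide_ofTupleChain, boundary_ofTupleChain, boundary_ofTupleChain, subdivide_ofTupleChain,
    TupleChain.boundary_subdivide]

theorem boundary_subdivideHomotopy_add (c : SingularChain R X (n + 1)) :
    boundary (subdivideHomotopy c) + subdivideHomotopy (boundary c) = c - subdivide c := by
  refine linearMap_apply_eq_of_single
    (f := boundary ∘ₗ subdivideHomotopy + subdivideHomotopy ∘ₗ boundary)
    (g := LinearMap.id - subdivide) (fun σ => ?_) c
  rw [LinearMap.add_apply, LinearMap.comp_apply, LinearMap.comp_apply, LinearMap.sub_apply,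
    LinearMap.id_apply, ← ofTupleChain_single_vertex, subdivide_ofTupleChain,
    subdivideHomotopy_ofTupleChain, boundary_ofTupleChain, boundary_ofTupleChain,
    subdivideHomotopy_ofTupleChain, ← map_add, TupleChain.boundary_subdivideHomotopy_add, map_sub]

theorem boundary_subdivide_pow (c : SingularChain R X (n + 1)) (M : ℕ) :
    boundary ((subdivide ^ M) c) = (subdivide ^ M) (boundary c) := by
  induction M with
  | zero => rfl
  | succ M ih =>
    rw [pow_succ', pow_succ', Module.End.mul_apply, Module.End.mul_apply, boundary_subdivide, ih]

/-- The chains all of whose simplices have image in `A`. -/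
noncomputable def chainsIn (R : Type*) [Ring R] (A : Set X) (n : ℕ) :
    Submodule R (SingularChain R X n) :=
  Finsupp.supported R R {σ | ∀ t, σ t ∈ A}

variable {A B : Set X}

theorem chainsIn_mono (h : A ⊆ B) : chainsIn R A n ≤ chainsIn R B n :=
  Finsupp.supported_mono fun _ hσ t => h (hσ t)

theorem chainsIn_inter : chainsIn R (A ∩ B) n = chainsIn R A n ⊓ chainsIn R B n := by
  rw [chainsIn, chainsIn, chainsIn, ← Finsupp.supported_inter]
  exact congrArg _ (Set.ext fun σ => forall_and)

theorem boundary_mem_chainsIn {c : SingularChain R X (n + 1)} (hc : c ∈ chainsIn R A (n + 1)) :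
    boundary c ∈ chainsIn R A n :=
  alternatingBoundary_mem_supported (s := {σ : C(stdSimplex ℝ (Fin (n + 1)), X) | ∀ t, σ t ∈ A})
    (t := {σ : C(stdSimplex ℝ (Fin n), X) | ∀ t, σ t ∈ A}) (fun _ _ hσ _ => hσ _) hc

theorem ofTupleChain_mem_chainsIn {σ : C(stdSimplex ℝ κ, X)} (hσ : ∀ t, σ t ∈ A)
    (c : TupleChain R (stdSimplex ℝ κ) n) : ofTupleChain σ c ∈ chainsIn R A n :=
  linearMap_apply_mem_of_mem_supported (s := Set.univ)
    (fun v _ => by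
      rw [ofTupleChain_single]
      exact Finsupp.single_mem_supported R 1 fun t => hσ _)
    (by rw [Finsupp.supported_univ]; trivial)

theorem subdivide_mem_chainsIn {c : SingularChain R X n} (hc : c ∈ chainsIn R A n) :
    subdivide c ∈ chainsIn R A n :=
  linearMap_apply_mem_of_mem_supported
    (fun σ hσ => by rw [subdivide_single]; exact ofTupleChain_mem_chainsIn hσ _) hc

theorem subdivideHomotopy_mem_chainsIn {c : SingularChain R X n} (hc : c ∈ chainsIn R A n) :
    subdivideHomotopy c ∈ chainsIn R A (n + 1) :=
  linearMap_apply_mem_of_mem_supported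
    (fun σ hσ => by rw [subdivideHomotopy_single]; exact ofTupleChain_mem_chainsIn hσ _) hc

theorem subdivide_pow_mem_chainsIn {c : SingularChain R X n} (hc : c ∈ chainsIn R A n) (M : ℕ) :
    (subdivide ^ M) c ∈ chainsIn R A n := by
  induction M with
  | zero => exact hc
  | succ M ih =>
    rw [pow_succ', Module.End.mul_apply]
    exact subdivide_mem_chainsIn ih

theorem exists_boundary_eq_sub_subdivide_pow {c : SingularChain R X (n + 1)}
    (hc : c ∈ chainsIn R A (n + 1)) (hdc : boundary c = 0) (M : ℕ) :
    ∃ e ∈ chainsIn R A (n + 2), boundary e = c - (subdivide ^ M) c := by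
  induction M with
  | zero => exact ⟨0, Submodule.zero_mem _, by simp⟩
  | succ M ih =>
    obtain ⟨e, he, hde⟩ := ih
    have homotopy := boundary_subdivideHomotopy_add ((subdivide ^ M) c)
    rw [boundary_subdivide_pow, hdc, map_zero, map_zero, add_zero] at homotopy
    refine ⟨e + subdivideHomotopy ((subdivide ^ M) c), Submodule.add_mem _ he
      (subdivideHomotopy_mem_chainsIn (subdivide_pow_mem_chainsIn hc M)), ?_⟩
    rw [map_add, hde, homotopy, pow_succ', Module.End.mul_apply, sub_add_sub_cancel]

section SmallChains

variable {U V : Set X}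

theorem exists_pos_forall_dist_le_affineSimplex_mem (hU : IsOpen U) (hV : IsOpen V)
    {σ : C(stdSimplex ℝ κ, X)} (hσ : ∀ t, σ t ∈ U ∪ V) :
    ∃ δ > 0, ∀ r < δ, ∀ (n : ℕ) (v : Fin n → stdSimplex ℝ κ), (∀ i j, dist (v i) (v j) ≤ r) →
      (∀ t, σ (affineSimplex v t) ∈ U) ∨ ∀ t, σ (affineSimplex v t) ∈ V := by
  obtain ⟨δ, hδ, ball_subset⟩ := lebesgue_number_lemma_of_metric_sUnion
    (s := (Set.univ : Set (stdSimplex ℝ κ))) (c := {σ ⁻¹' U, σ ⁻¹' V}) isCompact_univ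
    (by rintro _ (rfl | rfl); exacts [hU.preimage σ.continuous, hV.preimage σ.continuous])
    (fun t _ => by simpa using hσ t)
  refine ⟨δ, hδ, fun r hr n v hv => ?_⟩
  cases n with
  | zero => exact .inl fun t => absurd t.2.2 (by simp)
  | succ n =>
    have mem_ball (t) : affineSimplex v t ∈ Metric.ball (v 0) δ :=
      (dist_affineSimplex_le (hv · 0) t).trans_lt hr
    obtain ⟨_, rfl | rfl, hsub⟩ := ball_subset (v 0) trivial
    · exact .inl fun t => hsub (mem_ball t)
    · exact .inr fun t => hsub (mem_ball t)

theorem eventually_subdivide_pow_single_mem_sup (hU : IsOpen U) (hV : IsOpen V)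
    {σ : C(stdSimplex ℝ (Fin n), X)} (hσ : ∀ t, σ t ∈ U ∪ V) :
    ∀ᶠ M in Filter.atTop,
      (subdivide ^ M) (Finsupp.single σ (1 : R)) ∈ chainsIn R U n ⊔ chainsIn R V n := by
  obtain ⟨δ, hδ, affineSimplex_mem⟩ := exists_pos_forall_dist_le_affineSimplex_mem hU hV hσ
  have dist_vertex_le (i j : Fin n) :
      dist (stdSimplex.vertex (S := ℝ) i) (stdSimplex.vertex j) ≤ 1 :=
    (Metric.dist_le_diam_of_mem (bounded_stdSimplex (Fin n)) (Subtype.prop _)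
      (Subtype.prop _)).trans diam_stdSimplex_le
  filter_upwards [(tendsto_meshRatio_pow n).eventually (gt_mem_nhds hδ)] with M hM
  rw [← ofTupleChain_single_vertex, subdivide_pow_ofTupleChain, chainsIn, chainsIn,
    ← Finsupp.supported_union]
  refine linearMap_apply_mem_of_mem_supported (fun w hw => ?_)
    (subdivide_pow_single_mem_supported_mesh dist_vertex_le M)
  rw [ofTupleChain_single]
  exact Finsupp.single_mem_supported R 1 (affineSimplex_mem _ (by rwa [mul_one]) n w hw)

theorem eventually_subdivide_pow_mem_sup (hU : IsOpen U) (hV : IsOpen V)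
    {c : SingularChain R X n} (hc : c ∈ chainsIn R (U ∪ V) n) :
    ∀ᶠ M in Filter.atTop, (subdivide ^ M) c ∈ chainsIn R U n ⊔ chainsIn R V n := by
  rw [chainsIn, Finsupp.supported_eq_span_single] at hc
  induction hc using Submodule.span_induction with
  | mem _ h =>
    obtain ⟨σ, hσ, rfl⟩ := h
    exact eventually_subdivide_pow_single_mem_sup hU hV hσ
  | zero => exact .of_forall fun M => by rw [map_zero]; exact Submodule.zero_mem _
  | add _ _ _ _ hx hy =>
    filter_upwards [hx, hy] with M hxM hyM
    rw [map_add]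
    exact Submodule.add_mem _ hxM hyM
  | smul r _ _ hx =>
    filter_upwards [hx] with M hxM
    rw [map_smul]
    exact Submodule.smul_mem _ r hxM

theorem exists_add_eq_subdivide_pow (hU : IsOpen U) (hV : IsOpen V) {c : SingularChain R X n}
    (hc : c ∈ chainsIn R (U ∪ V) n) :
    ∃ M, ∃ a ∈ chainsIn R U n, ∃ b ∈ chainsIn R V n, a + b = (subdivide ^ M) c :=
  (eventually_subdivide_pow_mem_sup hU hV hc).exists.imp fun _ => Submodule.mem_sup.1

end SmallChains

end SingularChain

/-! ### Vanishing of reduced homology and Mayer–Vietoris -/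

namespace SingularChain

variable {R X Y : Type*} [Ring R] [TopologicalSpace X] [TopologicalSpace Y] {n : ℕ}

/-- The map of singular chains induced by a continuous map. -/
noncomputable def map (f : C(X, Y)) : SingularChain R X n →ₗ[R] SingularChain R Y n :=
  Finsupp.lmapDomain R R f.comp

theorem map_boundary (f : C(X, Y)) (c : SingularChain R X (n + 1)) :
    map f (boundary c) = boundary (map f c) :=
  (alternatingBoundary_lmapDomain (f := f.comp) (g := f.comp) (fun _ _ => rfl) c).symm

theorem map_injective {f : C(X, Y)} (hf : Function.Injective f) :
    Function.Injective (map (R := R) (n := n) f) :=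
  Finsupp.mapDomain_injective fun _ _ => (ContinuousMap.cancel_left hf).1

theorem range_map_of_isEmbedding {f : C(X, Y)} (hf : Topology.IsEmbedding f) :
    LinearMap.range (map (R := R) (n := n) f) = chainsIn R (Set.range f) n := by
  have range_comp :
      Set.range f.comp = {σ : C(stdSimplex ℝ (Fin n), Y) | ∀ t, σ t ∈ Set.range f} := by
    refine Set.ext fun σ => ⟨?_, fun hσ => ?_⟩
    · rintro ⟨τ, rfl⟩ t
      exact ⟨τ t, rfl⟩
    · choose τ hτ using hσ
      exact ⟨⟨τ, hf.continuous_iff.2 (by simpa [Function.comp_def, hτ] using σ.continuous)⟩,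
        ContinuousMap.ext hτ⟩
  rw [chainsIn, ← range_comp, ← Set.image_univ, ← Finsupp.lmapDomain_supported,
    Finsupp.supported_univ, Submodule.map_top, map]

end SingularChain

/-- The reduced singular homology of `X` with coefficients in `R` vanishes in degree `n`. -/
def ReducedAcyclicAt (R X : Type*) [Ring R] [TopologicalSpace X] (n : ℕ) : Prop :=
  Function.Exact (SingularChain.boundary (R := R) (X := X) (n := n + 1))
    (SingularChain.boundary (R := R) (X := X) (n := n))

section ReducedAcyclicAt

open SingularChain

variable {R X Y : Type*} [Ring R] [TopologicalSpace X] [TopologicalSpace Y] {n : ℕ}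

theorem reducedAcyclicAt_iff :
    ReducedAcyclicAt R X n ↔
      ∀ c : SingularChain R X (n + 1), boundary c = 0 → ∃ e, boundary e = c :=
  forall_congr' fun _ => ⟨Iff.mp, fun h => ⟨h, by rintro ⟨e, rfl⟩; exact boundary_boundary e⟩⟩

theorem reducedAcyclicAt_iff_of_isEmbedding {f : C(X, Y)} (hf : Topology.IsEmbedding f) :
    ReducedAcyclicAt R X n ↔ ∀ c ∈ chainsIn R (Set.range f) (n + 1), boundary c = 0 →
      ∃ e ∈ chainsIn R (Set.range f) (n + 2), boundary e = c := by
  simp only [reducedAcyclicAt_iff, ← range_map_of_isEmbedding hf, LinearMap.mem_range,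
    forall_exists_index, forall_apply_eq_imp_iff, exists_exists_eq_and, ← map_boundary,
    map_eq_zero_iff _ (map_injective hf.injective), (map_injective hf.injective).eq_iff]

theorem reducedAcyclicAt_coe_iff {A : Set X} :
    ReducedAcyclicAt R A n ↔ ∀ c ∈ chainsIn R A (n + 1), boundary c = 0 →
      ∃ e ∈ chainsIn R A (n + 2), boundary e = c := by
  simpa only [ContinuousMap.coe_mk, Subtype.range_coe] using
    reducedAcyclicAt_iff_of_isEmbedding (R := R) (n := n)
      (f := (⟨Subtype.val, continuous_subtype_val⟩ : C(A, X))) Topology.IsEmbedding.subtypeVal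

theorem reducedAcyclicAt_of_isEmpty [IsEmpty X] : ReducedAcyclicAt R X n := by
  have : IsEmpty C(stdSimplex ℝ (Fin (n + 1)), X) :=
    ⟨fun σ => isEmptyElim (σ (stdSimplex.vertex 0))⟩
  exact reducedAcyclicAt_iff.2 fun c _ => ⟨0, Subsingleton.elim _ c⟩

theorem reducedAcyclicAt_of_unique [Unique X] : ReducedAcyclicAt R X n := by
  let simplex (k : ℕ) : C(stdSimplex ℝ (Fin k), X) := ContinuousMap.const _ default
  have eq_simplex {k : ℕ} (σ : C(stdSimplex ℝ (Fin k), X)) : σ = simplex k :=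
    ContinuousMap.ext fun t => Subsingleton.elim _ _
  let raise (k : ℕ) : SingularChain R X k →ₗ[R] SingularChain R X (k + 1) :=
    Finsupp.lmapDomain R R fun _ => simplex (k + 1)
  have boundary_raise (c : SingularChain R X (n + 1)) :
      boundary (raise (n + 1) c) = c - raise n (boundary c) := by
    refine linearMap_apply_eq_of_single (f := boundary ∘ₗ raise (n + 1))
      (g := LinearMap.id - raise n ∘ₗ boundary) (fun σ => ?_) c
    simp [raise, boundary, alternatingBoundary_single, Fin.sum_univ_succ (n := n + 1), eq_simplex,
      pow_succ, sub_eq_add_neg, map_sum]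
  exact reducedAcyclicAt_iff.2 fun c hc =>
    ⟨raise (n + 1) c, by rw [boundary_raise, hc, map_zero, sub_zero]⟩

variable {U V : Set X}

theorem reducedAcyclicAt_union (hU : IsOpen U) (hV : IsOpen V)
    (acyclic_U : ReducedAcyclicAt R U (n + 1)) (acyclic_V : ReducedAcyclicAt R V (n + 1))
    (acyclic_inter : ReducedAcyclicAt R ↥(U ∩ V) n) :
    ReducedAcyclicAt R ↥(U ∪ V) (n + 1) := by
  rw [reducedAcyclicAt_coe_iff] at *
  intro z hz hdz
  obtain ⟨M, a, ha, b, hb, hab⟩ := exists_add_eq_subdivide_pow hU hV hz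
  obtain ⟨h, hh, hdh⟩ := exists_boundary_eq_sub_subdivide_pow hz hdz M
  have boundary_add : boundary a + boundary b = 0 := by
    rw [← map_add, hab, boundary_subdivide_pow, hdz, map_zero]
  have boundary_a_mem : boundary a ∈ chainsIn R (U ∩ V) (n + 1) := by
    rw [chainsIn_inter]
    refine ⟨boundary_mem_chainsIn ha, ?_⟩
    rw [eq_neg_of_add_eq_zero_left boundary_add]
    exact Submodule.neg_mem _ (boundary_mem_chainsIn hb)
  obtain ⟨e, he, hde⟩ := acyclic_inter _ boundary_a_mem (boundary_boundary a)
  obtain ⟨p, hp, hdp⟩ := acyclic_U (a - e)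
    (Submodule.sub_mem _ ha (chainsIn_mono Set.inter_subset_left he))
    (by rw [map_sub, hde, sub_self])
  obtain ⟨q, hq, hdq⟩ := acyclic_V (e + b)
    (Submodule.add_mem _ (chainsIn_mono Set.inter_subset_right he) hb)
    (by rw [map_add, hde, boundary_add])
  refine ⟨p + q + h, Submodule.add_mem _ (Submodule.add_mem _
    (chainsIn_mono Set.subset_union_left hp) (chainsIn_mono Set.subset_union_right hq)) hh, ?_⟩
  rw [map_add, map_add, hdp, hdq, hdh, ← hab]
  abel

theorem reducedAcyclicAt_left_of_union (hU : IsOpen U) (hV : IsOpen V)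
    (acyclic_union : ReducedAcyclicAt R ↥(U ∪ V) n)
    (acyclic_inter : ReducedAcyclicAt R ↥(U ∩ V) n) : ReducedAcyclicAt R U n := by
  rw [reducedAcyclicAt_coe_iff] at *
  intro z hz hdz
  obtain ⟨w, hw, hdw⟩ := acyclic_union z (chainsIn_mono Set.subset_union_left hz) hdz
  obtain ⟨M, a, ha, b, hb, hab⟩ := exists_add_eq_subdivide_pow hU hV hw
  obtain ⟨h, hh, hdh⟩ := exists_boundary_eq_sub_subdivide_pow hz hdz M
  have boundary_add : boundary a + boundary b = (SingularChain.subdivide ^ M) z := by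
    rw [← map_add, hab, boundary_subdivide_pow, hdw]
  have boundary_b_mem : boundary b ∈ chainsIn R (U ∩ V) (n + 1) := by
    rw [chainsIn_inter]
    refine ⟨?_, boundary_mem_chainsIn hb⟩
    rw [eq_sub_of_add_eq' boundary_add]
    exact Submodule.sub_mem _ (subdivide_pow_mem_chainsIn hz M) (boundary_mem_chainsIn ha)
  obtain ⟨e, he, hde⟩ := acyclic_inter _ boundary_b_mem (boundary_boundary b)
  refine ⟨a + e + h, Submodule.add_mem _ (Submodule.add_mem _
    ha (chainsIn_mono Set.inter_subset_left he)) hh, ?_⟩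
  rw [map_add, map_add, hde, boundary_add, hdh, add_sub_cancel]

end ReducedAcyclicAt

/-! ### Comparison with the singular chain complex and homotopy invariance -/

open Opposite

universe u

/-- The singular chain complex with coefficients in `R`, as a functor of the space. -/
noncomputable def singularChainFunctor (R : Type u) [Ring R] :
    TopCat.{u} ⥤ ChainComplex (ModuleCat.{u} R) ℕ :=
  TopCat.toSSet ⋙ (SimplicialObject.whiskering (Type u) (ModuleCat.{u} R)).obj (ModuleCat.free R) ⋙
    AlgebraicTopology.alternatingFaceMapComplex (ModuleCat.{u} R)

section Comparison

variable {R X Y : Type u} [Ring R] [TopologicalSpace X] [TopologicalSpace Y] {k : ℕ}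

theorem singularChainFunctor_obj_d (X : TopCat.{u}) (n : ℕ) :
    ((singularChainFunctor R).obj X).d (n + 1) n =
      ModuleCat.ofHom (alternatingBoundary R fun i => (TopCat.toSSet.obj X).δ i) := by
  refine (AlgebraicTopology.AlternatingFaceMapComplex.obj_d_eq _ _).trans (ModuleCat.hom_ext ?_)
  rw [ModuleCat.hom_sum]
  exact Finset.sum_congr rfl fun i _ => ModuleCat.hom_zsmul _ _

/-- The singular chain module in degree `k` is the free module on the continuous maps from the
standard simplex with `k + 1` vertices. -/
noncomputable def singularChainEquiv (R X : Type u) [Ring R] [TopologicalSpace X] (k : ℕ) :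
    ((TopCat.toSSet.obj (TopCat.of X)).obj (op (SimplexCategory.mk k)) →₀ R) ≃ₗ[R]
      SingularChain R X (k + 1) :=
  Finsupp.domLCongr (TopCat.toSSetObjEquiv (TopCat.of X) (op (SimplexCategory.mk k)))

theorem singularChainEquiv_apply
    (c : (TopCat.toSSet.obj (TopCat.of X)).obj (op (SimplexCategory.mk k)) →₀ R) :
    singularChainEquiv R X k c =
      Finsupp.lmapDomain R R (TopCat.toSSetObjEquiv (TopCat.of X) (op (SimplexCategory.mk k))) c :=
  Finsupp.equivMapDomain_eq_mapDomain _ c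

theorem boundary_comp_singularChainEquiv :
    SingularChain.boundary ∘ₗ (singularChainEquiv R X (k + 1)).toLinearMap =
      (singularChainEquiv R X k).toLinearMap ∘ₗ
        alternatingBoundary R fun i => (TopCat.toSSet.obj (TopCat.of X)).δ i := by
  refine LinearMap.ext fun c => ?_
  simp only [LinearMap.comp_apply, LinearEquiv.coe_coe, singularChainEquiv_apply]
  refine alternatingBoundary_lmapDomain
    (d' := fun i (σ : C(stdSimplex ℝ (Fin (k + 2)), X)) => σ.comp (simplexFace i))
    (fun i σ => ?_) c
  rfl

theorem subsingleton_homology_succ_iff :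
    Subsingleton (((singularChainFunctor R).obj (TopCat.of X)).homology (k + 1)) ↔
      ReducedAcyclicAt R X (k + 1) := by
  rw [← ModuleCat.isZero_iff_subsingleton, ← HomologicalComplex.exactAt_iff_isZero_homology,
    HomologicalComplex.exactAt_iff' _ (k + 2) (k + 1) k (by simp) (by simp),
    ShortComplex.ShortExact.moduleCat_exact_iff_function_exact]
  refine Iff.trans ?_ (Function.Exact.iff_of_ladder_linearEquiv boundary_comp_singularChainEquiv
    boundary_comp_singularChainEquiv).symm
  change Function.Exact (((singularChainFunctor R).obj (.of X)).d (k + 2) (k + 1)).hom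
    (((singularChainFunctor R).obj (.of X)).d (k + 1) k).hom ↔ _
  rw [singularChainFunctor_obj_d, singularChainFunctor_obj_d]
  rfl

theorem homologyMap_eq_of_homotopy {X Y : TopCat.{u}} {f g : X ⟶ Y} (H : TopCat.Homotopy f g) :
    HomologicalComplex.homologyMap ((singularChainFunctor R).map f) k =
      HomologicalComplex.homologyMap ((singularChainFunctor R).map g) k :=
  Homotopy.homologyMap_eq (SimplicialObject.Homotopy.toChainHomotopy
    (H.toSSet.toSimplicialObjectHomotopy.whiskerRight (ModuleCat.free R))) k

theorem ReducedAcyclicAt.of_homotopy_id (acyclic : ReducedAcyclicAt R Y (k + 1)) (f : C(X, Y))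
    (g : C(Y, X)) (H : ContinuousMap.Homotopy (.id X) (g.comp f)) :
    ReducedAcyclicAt R X (k + 1) := by
  rw [← subsingleton_homology_succ_iff, ← ModuleCat.isZero_iff_subsingleton] at acyclic ⊢
  have id_eq := homologyMap_eq_of_homotopy (R := R) (k := k + 1) (X := .of X) (Y := .of X)
    (f := 𝟙 _) (g := TopCat.ofHom f ≫ TopCat.ofHom g) H
  rw [(singularChainFunctor R).map_id, (singularChainFunctor R).map_comp,
    HomologicalComplex.homologyMap_id, HomologicalComplex.homologyMap_comp] at id_eq
  rw [Limits.IsZero.iff_id_eq_zero, id_eq,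
    acyclic.eq_zero_of_tgt (HomologicalComplex.homologyMap _ _), Limits.zero_comp]

theorem ReducedAcyclicAt.of_homeomorph (acyclic : ReducedAcyclicAt R Y (k + 1)) (e : X ≃ₜ Y) :
    ReducedAcyclicAt R X (k + 1) :=
  acyclic.of_homotopy_id e e.symm
    (.cast (.refl (.id X)) rfl (ContinuousMap.ext e.symm_apply_apply).symm)

end Comparison

/-! ### Complements of disjoint sections -/

section StarConvexFibers

variable {R B E : Type u} [Ring R] [TopologicalSpace B] [AddCommGroup E] [Module ℝ E]
  [TopologicalSpace E] [ContinuousAdd E] [ContinuousSMul ℝ E] {k : ℕ}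

theorem ReducedAcyclicAt.of_starConvex_fibers (acyclic : ReducedAcyclicAt R B (k + 1))
    {A : Set (B × E)} (c : C(B, E)) (c_mem : ∀ b, (b, c b) ∈ A)
    (star : ∀ b, StarConvex ℝ (c b) {z | (b, z) ∈ A}) : ReducedAcyclicAt R A (k + 1) := by
  let projection : C(A, B) := ⟨fun p => p.1.1, by fun_prop⟩
  let lift : C(B, A) := ⟨fun b => ⟨(b, c b), c_mem b⟩, by fun_prop⟩
  exact acyclic.of_homotopy_id projection lift
    { toFun := fun p => ⟨(p.2.1.1, (p.1 : ℝ) • c p.2.1.1 + (1 - p.1 : ℝ) • p.2.1.2),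
        star _ p.2.2 p.1.2.1 (sub_nonneg.2 p.1.2.2) (add_sub_cancel _ _)⟩
      continuous_toFun := by fun_prop
      map_zero_left := fun p => Subtype.ext (by simp)
      map_one_left := fun p => Subtype.ext (by simp [projection, lift]) }

end StarConvexFibers

theorem exists_continuous_pos_forall_lt {B ι : Type*} [TopologicalSpace B] (t : Finset ι)
    {f : ι → C(B, ℝ)} (hf : ∀ i ∈ t, ∀ b, 0 < f i b) :
    ∃ ε : C(B, ℝ), ∀ b, 0 < ε b ∧ ∀ i ∈ t, ε b < f i b := by
  classical
  induction t using Finset.induction_on with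
  | empty => exact ⟨1, fun b => ⟨one_pos, by simp⟩⟩
  | insert j t _ ih =>
    rw [Finset.forall_mem_insert] at hf
    obtain ⟨ε, hε⟩ := ih hf.2
    refine ⟨ε ⊓ (2⁻¹ : ℝ) • f j, fun b => ?_⟩
    have half_pos : 0 < 2⁻¹ * f j b := mul_pos (by norm_num) (hf.1 b)
    refine ⟨lt_inf_iff.2 ⟨(hε b).1, half_pos⟩, Finset.forall_mem_insert _ _ _ |>.2 ⟨?_, ?_⟩⟩
    · exact inf_lt_of_right_lt (show 2⁻¹ * f j b < f j b by linarith [hf.1 b])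
    · exact fun i hi => inf_lt_of_left_lt ((hε b).2 i hi)

section Sections

variable {R B E : Type u} {ι : Type*} [Ring R] [TopologicalSpace B] [NormedAddCommGroup E]

/-- The complement in `B × E` of the graphs of the sections `s i`, `i ∈ t`. -/
def sectionComplement (s : ι → C(B, E)) (t : Finset ι) : Set (B × E) :=
  {p | ∀ i ∈ t, p.2 ≠ s i p.1}

/-- The points of `B × E` which differ from the section `s j` by an element of `D` and are nearer to
it than every `s i`, `i ∈ t`, is. For `D = univ` this is a tubular neighbourhood of `s j`. -/
def tube (s : ι → C(B, E)) (t : Finset ι) (j : ι) (D : Set E) : Set (B × E) :=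
  {p | p.2 - s j p.1 ∈ D ∧ ∀ i ∈ t, ‖p.2 - s j p.1‖ < ‖s i p.1 - s j p.1‖}

variable {s : ι → C(B, E)} {t : Finset ι} {j : ι} {D D' : Set E} {k : ℕ}

theorem isOpen_sectionComplement : IsOpen (sectionComplement s t) := by
  simp only [sectionComplement, Set.ofPred_forall]
  exact isOpen_biInter_finset fun i _ => isOpen_ne_fun (by fun_prop) (by fun_prop)

theorem isOpen_tube (hD : IsOpen D) : IsOpen (tube s t j D) := by
  simp only [tube, Set.ofPred_and, Set.ofPred_forall]
  exact (hD.preimage (by fun_prop)).inter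
    (isOpen_biInter_finset fun i _ => isOpen_lt (by fun_prop) (by fun_prop))

theorem tube_union : tube s t j (D ∪ D') = tube s t j D ∪ tube s t j D' :=
  Set.ext fun _ => or_and_right

theorem tube_inter : tube s t j (D ∩ D') = tube s t j D ∩ tube s t j D' :=
  Set.ext fun _ => and_and_right

theorem tube_subset_sectionComplement : tube s t j D ⊆ sectionComplement s t :=
  fun _ hp i hi heq => (hp.2 i hi).ne (by rw [heq])

theorem mem_sectionComplement_insert [DecidableEq ι] {p : B × E} :
    p ∈ sectionComplement s (insert j t) ↔ p.2 ≠ s j p.1 ∧ p ∈ sectionComplement s t :=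
  Finset.forall_mem_insert _ _ _

theorem sectionComplement_insert_inter_tube [DecidableEq ι] :
    sectionComplement s (insert j t) ∩ tube s t j Set.univ = tube s t j {0}ᶜ := by
  ext p
  refine ⟨fun ⟨hp, hp'⟩ => ⟨sub_ne_zero.2 (mem_sectionComplement_insert.1 hp).1, hp'.2⟩,
    fun hp => ⟨mem_sectionComplement_insert.2 ⟨sub_ne_zero.1 hp.1, ?_⟩, trivial, hp.2⟩⟩
  exact tube_subset_sectionComplement hp

theorem sectionComplement_insert_union_tube [DecidableEq ι] (hj : ∀ i ∈ t, ∀ b, s i b ≠ s j b) :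
    sectionComplement s (insert j t) ∪ tube s t j Set.univ = sectionComplement s t := by
  ext p
  refine ⟨fun hp => hp.elim (fun hp => (mem_sectionComplement_insert.1 hp).2)
    fun hp => tube_subset_sectionComplement hp, fun hp => ?_⟩
  by_cases on_section : p.2 = s j p.1
  · refine Or.inr ⟨trivial, fun i hi => ?_⟩
    rw [on_section, sub_self, norm_zero, norm_pos_iff, sub_ne_zero]
    exact hj i hi p.1
  · exact Or.inl (mem_sectionComplement_insert.2 ⟨on_section, hp⟩)

theorem reducedAcyclicAt_tube [NormedSpace ℝ E] (hj : ∀ i ∈ t, ∀ b, s i b ≠ s j b) {u : E}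
    (hu : ‖u‖ ≤ 1) (hD : D.Nonempty) (star : ∀ r : ℝ, 0 < r → StarConvex ℝ (r • u) D)
    (acyclic : ReducedAcyclicAt R B (k + 1)) : ReducedAcyclicAt R (tube s t j D) (k + 1) := by
  obtain ⟨ε, hε⟩ := exists_continuous_pos_forall_lt t (B := B)
    (f := fun i => ⟨fun b => ‖s i b - s j b‖, by fun_prop⟩)
    fun i hi b => norm_pos_iff.2 (sub_ne_zero.2 (hj i hi b))
  have norm_lt (b : B) (i : ι) (hi : i ∈ t) : ‖ε b • u‖ < ‖s i b - s j b‖ :=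
    calc ‖ε b • u‖ = ε b * ‖u‖ := by rw [norm_smul, Real.norm_of_nonneg (hε b).1.le]
      _ ≤ ε b := mul_le_of_le_one_right (hε b).1.le hu
      _ < ‖s i b - s j b‖ := (hε b).2 i hi
  refine acyclic.of_starConvex_fibers ⟨fun b => s j b + ε b • u, by fun_prop⟩
    (fun b => ⟨?_, fun i hi => ?_⟩) fun b => ?_
  · simpa using (star _ (hε b).1).mem hD
  · simpa using norm_lt b i hi
  · have star_fiber : StarConvex ℝ (ε b • u) (D ∩ ⋂ i ∈ t, Metric.ball 0 ‖s i b - s j b‖) :=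
      (star _ (hε b).1).inter <| starConvex_iInter₂ fun i hi =>
        (convex_ball _ _).starConvex (mem_ball_zero_iff.2 (norm_lt b i hi))
    have fiber_eq : {z | (b, z) ∈ tube s t j D} =
        (fun z => z + -s j b) ⁻¹' (D ∩ ⋂ i ∈ t, Metric.ball 0 ‖s i b - s j b‖) := by
      ext z
      simp [tube, sub_eq_add_neg]
    rw [fiber_eq]
    exact StarConvex.preimage_add_left (by simpa using star_fiber)

end Sections

section PuncturedPlane

open Complex

theorem compl_zero_eq_slitPlane_union_neg : ({0}ᶜ : Set ℂ) = slitPlane ∪ -slitPlane := by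
  refine Set.ext fun z => ⟨mem_slitPlane_or_neg_mem_slitPlane, ?_⟩
  rintro (hz | hz) rfl <;> simp at hz

theorem slitPlane_inter_neg : slitPlane ∩ -slitPlane = {z | 0 < z.im} ∪ {z | z.im < 0} := by
  ext z
  simp only [Set.mem_inter_iff, Set.mem_neg, mem_slitPlane_iff, neg_re, neg_im, neg_ne_zero,
    Set.mem_union, Set.mem_ofPred_eq]
  grind

variable {R B : Type} {ι : Type*} [Ring R] [TopologicalSpace B] {s : ι → C(B, ℂ)} {t : Finset ι}
  {j : ι} {k : ℕ}

theorem reducedAcyclicAt_tube_im_ne_zero (hj : ∀ i ∈ t, ∀ b, s i b ≠ s j b)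
    (acyclic : ReducedAcyclicAt R B (k + 1)) :
    ReducedAcyclicAt R (tube s t j ({z | 0 < z.im} ∪ {z | z.im < 0})) (k + 1) := by
  have acyclic_upper : ReducedAcyclicAt R (tube s t j {z | 0 < z.im}) (k + 1) :=
    reducedAcyclicAt_tube hj (u := I) (by simp) ⟨I, by simp⟩
      (fun r hr => (convex_halfSpace_im_gt 0).starConvex (by simpa using hr)) acyclic
  have acyclic_lower : ReducedAcyclicAt R (tube s t j {z | z.im < 0}) (k + 1) :=
    reducedAcyclicAt_tube hj (u := -I) (by simp) ⟨-I, by simp⟩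
      (fun r hr => (convex_halfSpace_im_lt 0).starConvex (by simpa using hr)) acyclic
  have isEmpty_inter : IsEmpty ↥(tube s t j {z | 0 < z.im} ∩ tube s t j {z | z.im < 0}) :=
    ⟨fun p => lt_asymm (Set.mem_ofPred.1 p.2.1.1) (Set.mem_ofPred.1 p.2.2.1)⟩
  rw [tube_union]
  exact reducedAcyclicAt_union (isOpen_tube (isOpen_lt continuous_const continuous_im))
    (isOpen_tube (isOpen_lt continuous_im continuous_const)) acyclic_upper acyclic_lower
    reducedAcyclicAt_of_isEmpty

theorem reducedAcyclicAt_tube_compl_zero (hj : ∀ i ∈ t, ∀ b, s i b ≠ s j b)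
    (acyclic : ReducedAcyclicAt R B (k + 1)) (acyclic_succ : ReducedAcyclicAt R B (k + 2)) :
    ReducedAcyclicAt R (tube s t j {0}ᶜ) (k + 2) := by
  have acyclic_slit : ReducedAcyclicAt R (tube s t j slitPlane) (k + 2) :=
    reducedAcyclicAt_tube hj (u := 1) (by simp) ⟨1, one_mem_slitPlane⟩
      (fun r hr => by simpa using starConvex_ofReal_slitPlane hr) acyclic_succ
  have acyclic_neg_slit : ReducedAcyclicAt R (tube s t j (-slitPlane)) (k + 2) :=
    reducedAcyclicAt_tube hj (u := -1) (by simp) ⟨-1, by simp⟩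
      (fun r hr => by simpa using (starConvex_ofReal_slitPlane hr).neg) acyclic_succ
  have acyclic_inter : ReducedAcyclicAt R ↥(tube s t j slitPlane ∩ tube s t j (-slitPlane))
      (k + 1) := by
    rw [← tube_inter, slitPlane_inter_neg]
    exact reducedAcyclicAt_tube_im_ne_zero hj acyclic
  rw [compl_zero_eq_slitPlane_union_neg, tube_union]
  exact reducedAcyclicAt_union (isOpen_tube isOpen_slitPlane) (isOpen_tube isOpen_slitPlane.neg)
    acyclic_slit acyclic_neg_slit acyclic_inter

theorem reducedAcyclicAt_sectionComplement (hs : ∀ b, Function.Injective fun i => s i b)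
    (acyclic : ReducedAcyclicAt R B (k + 1)) (acyclic_succ : ReducedAcyclicAt R B (k + 2)) :
    ReducedAcyclicAt R (sectionComplement s t) (k + 2) := by
  classical
  induction t using Finset.induction_on with
  | empty =>
    exact acyclic_succ.of_starConvex_fibers 0 (by simp [sectionComplement])
      fun b => by simpa [sectionComplement] using starConvex_univ _
  | insert j t hjt ih =>
    have hj : ∀ i ∈ t, ∀ b, s i b ≠ s j b := fun i hi b =>
      (hs b).ne (ne_of_mem_of_not_mem hi hjt)
    refine reducedAcyclicAt_left_of_union (V := tube s t j Set.univ) isOpen_sectionComplement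
      (isOpen_tube isOpen_univ) ?_ ?_
    · rwa [sectionComplement_insert_union_tube hj]
    · rw [sectionComplement_insert_inter_tube]
      exact reducedAcyclicAt_tube_compl_zero hj acyclic acyclic_succ

end PuncturedPlane

/-! ### Configuration spaces of the punctured plane -/

/-- The ordered configurations of `m` distinct points of the plane which avoid the finite set `Q`
of punctures. -/
def puncturedConfig (Q : Finset ℂ) (m : ℕ) : Set (Fin m → ℂ) :=
  {z | Function.Injective z ∧ ∀ a, z a ∉ Q}

section PuncturedConfig

variable {Q : Finset ℂ} {m : ℕ}

theorem continuous_puncturedConfig_apply (a : Fin m) :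
    Continuous fun z : puncturedConfig Q m => z.1 a :=
  (continuous_apply a).comp continuous_subtype_val

/-- The values forbidden to a further point of a configuration, namely the punctures and the points
already present, as sections over the configuration space. -/
noncomputable def forbiddenSection (Q : Finset ℂ) (m : ℕ) : Q ⊕ Fin m → C(puncturedConfig Q m, ℂ) :=
  Sum.elim (fun q => .const _ q) fun a =>
    ⟨fun z => z.1 a, continuous_puncturedConfig_apply a⟩

theorem forbiddenSection_injective (z : puncturedConfig Q m) :
    Function.Injective fun i => forbiddenSection Q m i z := by
  rintro (q | a) (q' | a') h
  · exact congrArg _ (Subtype.ext h)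
  · exact absurd h (ne_of_mem_of_not_mem q.2 (z.2.2 a'))
  · exact absurd h.symm (ne_of_mem_of_not_mem q'.2 (z.2.2 a))
  · exact congrArg _ (z.2.1 h)

theorem mem_sectionComplement_forbiddenSection {p : puncturedConfig Q m × ℂ} :
    p ∈ sectionComplement (forbiddenSection Q m) Finset.univ ↔
      p.2 ∉ Q ∧ p.2 ∉ Set.range p.1.1 := by
  simp only [sectionComplement, Set.mem_ofPred_eq, Finset.mem_univ, true_imp_iff, Sum.forall,
    Set.mem_range, not_exists]
  exact and_congr ⟨fun h hq => h ⟨_, hq⟩ rfl, fun h q hq => h (hq ▸ q.2)⟩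
    (forall_congr' fun _ => ne_comm)

theorem cons_mem_puncturedConfig_iff {w : ℂ} {z : Fin m → ℂ} :
    (Fin.cons w z : Fin (m + 1) → ℂ) ∈ puncturedConfig Q (m + 1) ↔
      z ∈ puncturedConfig Q m ∧ w ∉ Q ∧ w ∉ Set.range z := by
  simp only [puncturedConfig, Set.mem_ofPred_eq, Fin.cons_injective_iff, Fin.forall_fin_succ,
    Fin.cons_zero, Fin.cons_succ]
  tauto

theorem mem_puncturedConfig_succ_iff {z : Fin (m + 1) → ℂ} :
    z ∈ puncturedConfig Q (m + 1) ↔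
      Fin.tail z ∈ puncturedConfig Q m ∧ z 0 ∉ Q ∧ z 0 ∉ Set.range (Fin.tail z) := by
  rw [← cons_mem_puncturedConfig_iff, Fin.cons_self_tail]

/-- Forgetting the first point identifies a configuration space with the complement of the
forbidden sections over the configuration space with one point less. -/
noncomputable def puncturedConfigSuccHomeomorph (Q : Finset ℂ) (m : ℕ) :
    puncturedConfig Q (m + 1) ≃ₜ sectionComplement (forbiddenSection Q m) Finset.univ where
  toFun z := ⟨(⟨Fin.tail z.1, (mem_puncturedConfig_succ_iff.1 z.2).1⟩, z.1 0),
    mem_sectionComplement_forbiddenSection.2 (mem_puncturedConfig_succ_iff.1 z.2).2⟩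
  invFun p := ⟨Fin.cons p.1.2 p.1.1.1, cons_mem_puncturedConfig_iff.2
    ⟨p.1.1.2, mem_sectionComplement_forbiddenSection.1 p.2⟩⟩
  left_inv z := Subtype.ext (Fin.cons_self_tail z.1)
  right_inv p := by ext <;> simp
  continuous_toFun := by
    have continuous_tail : Continuous fun z : puncturedConfig Q (m + 1) => Fin.tail z.1 :=
      continuous_pi fun a => continuous_puncturedConfig_apply a.succ
    exact .subtype_mk (.prodMk (.subtype_mk continuous_tail _)
      (continuous_puncturedConfig_apply 0)) _
  continuous_invFun := by fun_prop

theorem reducedAcyclicAt_puncturedConfig {R : Type} [Ring R] {k : ℕ} (hk : m < k) :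
    ReducedAcyclicAt R (puncturedConfig Q m) k := by
  induction m generalizing k with
  | zero =>
    have : Unique (puncturedConfig Q 0) :=
      { default := ⟨Fin.elim0, Function.injective_of_subsingleton _, fun a => a.elim0⟩
        uniq := fun z => Subsingleton.elim _ _ }
    exact reducedAcyclicAt_of_unique
  | succ m ih =>
    obtain ⟨k, rfl⟩ := Nat.exists_eq_add_of_le' (show 2 ≤ k by lia)
    exact (reducedAcyclicAt_sectionComplement forbiddenSection_injective (t := Finset.univ)
      (k := k) (ih (by lia)) (ih (by lia))).of_homeomorph (puncturedConfigSuccHomeomorph Q m)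

theorem modelX_eq_puncturedConfig (m : ℕ) : modelX m = puncturedConfig {0, 1} m := by
  ext z
  simp only [modelX, puncturedConfig, ne_eq, not_imp_not, Set.mem_ofPred_eq, Function.Injective,
    Finset.mem_insert, Finset.mem_singleton, not_or, forall_and]
  tauto

end PuncturedConfig

theorem singularHomologyQ_modelX_eq_zero_general {R : Type} [Ring R] (Q : Finset ℂ) {m k : ℕ}
    (hk : m < k) :
    Subsingleton (((singularChainFunctor R).obj (TopCat.of (puncturedConfig Q m))).homology k) := by
  obtain ⟨k, rfl⟩ := Nat.exists_eq_add_of_lt hk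
  exact subsingleton_homology_succ_iff.2 (reducedAcyclicAt_puncturedConfig hk)

/-- Genus-zero case of Harer's vanishing theorem (Theorem 5.1):
`H_k(M_{0,m+3}; ℚ) = H_k(X_m; ℚ) = 0` for `k > m`. -/
theorem singularHomologyQ_modelX_eq_zero (m : ℕ) (hm : 1 ≤ m) (k : ℕ) (hk : m < k) :
    Subsingleton (singularHomologyQ (TopCat.of (modelX m)) k) := by
  rw [modelX_eq_puncturedConfig]
  exact singularHomologyQ_modelX_eq_zero_general {0, 1} hk
end
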